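/- Let a, b, k be positive integers with gcd(a,b)=1 and 0 ≤ k ≤ a < b. Then the rational q-Schröder polynomial C(k, a−k, b−k; q) = (1/[a+b−k]_q) · [a+b−k choose k, a−k, b−k]_q is parity-unimodal: writing C(k,a−k,b−k;q) = Σ_i a_i q^i, both subsequences (a_0, a_2, a_4, …) and (a_1, a_3, a_5, …) are unimodal. -/

import Mathlib

open Polynomial in
/-- The q-analogue `[n]_q = 1 + q + ⋯ + q^{n-1}` as a polynomial in `ℤ[q]`. -/
noncomputable def qInt (n : ℕ) : Polynomial ℤ := ∑ i ∈ Finset.range n, X ^ i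

/-- The q-factorial `[n]!_q = [n]_q [n-1]_q ⋯ [1]_q`. -/
noncomputable def qFactorial : ℕ → Polynomial ℤ
  | 0 => 1
  | n + 1 => qInt (n + 1) * qFactorial n

/-- A sequence is unimodal if it weakly increases then weakly decreases. -/
def UnimodalSeq (f : ℕ → ℤ) : Prop :=
  ∃ m : ℕ, (∀ i j : ℕ, i ≤ j → j ≤ m → f i ≤ f j) ∧ (∀ i j : ℕ, m ≤ i → i ≤ j → f j ≤ f i)

/-- A polynomial is parity-unimodal if its even-indexed and odd-indexed coefficient
sequences are each unimodal. -/
def ParityUnimodal (P : Polynomial ℤ) : Prop :=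
  UnimodalSeq (fun i => P.coeff (2 * i)) ∧ UnimodalSeq (fun i => P.coeff (2 * i + 1))

/-!
Take variables `x_i` indexed by `α ⊕ β`, where `|α| = k` and `|β| = a - k`, and put `c = b / a`.
The coefficients `f_l` of `t ^ b` in `∏ j, (1 - x_j t) ^ c / (1 - x_l t)` are killed by all Dunkl
operators with parameter `c`, so the ideal generated by the `f_l` is stable under these operators.

* The `θ_l = f_l + (∑ i, x_i) ^ b` have no common zero but `0` because `a` and `b` are coprime, so
  they form a complete intersection. They are permuted by the symmetric group, and the pencil
  joining them to the powers `x_l ^ b` preserves the multiplicities of isotypic parts: for almost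
  every member of the pencil these are at most those of either end, while the total dimensions
  agree. The part that is alternating in `α` and symmetric in `β` is therefore counted by pairs of
  a `k`-subset and an `(a - k)`-multiset of `{0, …, b - 1}`.
* As `∑ i, x_i` is a nonzerodivisor modulo the `f_l`, replacing its `b`-th power by itself divides
  the Hilbert series of that part by `[b]_q`, leaving `q ^ (k choose 2) * C(k, a - k, b - k; q)`.
* The Dunkl Laplacian and multiplication by `∑ i, x_i ^ 2` generate an action of `𝔰𝔩₂`, hence this
  multiplication is injective on the quotient by the `f_l` and `∑ i, x_i` below the middle degree.
  So the coefficients of `C` increase in steps of two up to the middle, and `C` is palindromic.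
-/

section QuotientsOfPolynomialRings

open MvPolynomial

attribute [local instance] MvPolynomial.gradedAlgebra

section HilbertSeries

variable {σ K : Type*} [Field K]

theorem homogeneousComponent_add_mul {R : Type*} [CommSemiring R] {f : MvPolynomial σ R} {e : ℕ}
    (hf : f.IsHomogeneous e) (u : MvPolynomial σ R) (d : ℕ) :
    homogeneousComponent (d + e) (u * f) = homogeneousComponent d u * f := by
  simp_rw [← decomposition.decompose'_apply]
  exact DirectSum.coe_decompose_mul_add_of_right_mem (homogeneousSubmodule σ R) hf

theorem homogeneousComponent_mul_of_lt {R : Type*} [CommSemiring R] {f : MvPolynomial σ R} {e : ℕ}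
    (hf : f.IsHomogeneous e) (u : MvPolynomial σ R) {d : ℕ} (hd : d < e) :
    homogeneousComponent d (u * f) = 0 := by
  rw [← decomposition.decompose'_apply]
  exact DirectSum.coe_decompose_mul_of_right_mem_of_not_le (homogeneousSubmodule σ R) hf hd.not_ge

theorem isHomogeneous_ideal_span_image {ι : Type*} {f : ι → MvPolynomial σ K} {e : ι → ℕ}
    (hf : ∀ i, (f i).IsHomogeneous (e i)) (s : Set ι) :
    (Ideal.span (f '' s)).IsHomogeneous (homogeneousSubmodule σ K) :=
  Ideal.homogeneous_span _ _ <| Set.forall_mem_image.2 fun i _ => ⟨e i, hf i⟩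

theorem isHomogeneous_colon_singleton {J : Ideal (MvPolynomial σ K)}
    (hJ : J.IsHomogeneous (homogeneousSubmodule σ K)) {f : MvPolynomial σ K} {e : ℕ}
    (hf : f.IsHomogeneous e) :
    (J.colon {f}).IsHomogeneous (homogeneousSubmodule σ K) := by
  intro n u hu
  suffices homogeneousComponent n u ∈ J.colon {f} by
    rw [← decomposition.decompose'_apply] at this
    exact this
  rw [Submodule.mem_colon_singleton, smul_eq_mul] at hu ⊢
  exact homogeneousComponent_add_mul hf u n ▸ homogeneousComponent_mem_of_mem hJ hu (n + e)

theorem colon_singleton_pow_eq {R : Type*} [CommRing R] {J : Ideal R} {f : R}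
    (h : J.colon {f} = J) (n : ℕ) : J.colon {f ^ n} = J := by
  refine le_antisymm (fun u hu => ?_) Ideal.le_colon
  induction n with
  | zero => simpa [Submodule.mem_colon_singleton] using hu
  | succ n ih =>
    refine ih ?_
    rw [Submodule.mem_colon_singleton, smul_eq_mul] at hu ⊢
    rwa [← h, Submodule.mem_colon_singleton, smul_eq_mul, mul_assoc, ← pow_succ]

theorem finrank_map_add_finrank_inf_ker {V W : Type*} [AddCommGroup V] [Module K V]
    [AddCommGroup W] [Module K W] (m : V →ₗ[K] W) (B : Submodule K V) [FiniteDimensional K B] :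
    Module.finrank K (B.map m) + Module.finrank K (B ⊓ LinearMap.ker m : Submodule K V) =
      Module.finrank K B := by
  rw [← LinearMap.finrank_range_add_finrank_ker (m.domRestrict B), LinearMap.range_domRestrict,
    ← Submodule.map_comap_subtype, Submodule.finrank_map_subtype_eq]
  rfl

theorem finrank_sup_map_add_finrank_inf_comap {V W : Type*} [AddCommGroup V] [Module K V]
    [AddCommGroup W] [Module K W] (m : V →ₗ[K] W) (A : Submodule K W) (B : Submodule K V)
    [FiniteDimensional K A] [FiniteDimensional K B] :
    Module.finrank K (A ⊔ B.map m : Submodule K W) +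
        Module.finrank K (B ⊓ A.comap m : Submodule K V) =
      Module.finrank K A + Module.finrank K B := by
  have hsup := Submodule.finrank_sup_add_finrank_inf_eq A (B.map m)
  have hB := finrank_map_add_finrank_inf_ker m B
  have hinf := finrank_map_add_finrank_inf_ker m (B ⊓ A.comap m)
  rw [← Submodule.map_inf_eq_map_inf_comap, inf_comm (B.map m), inf_assoc,
    inf_eq_right.2 (LinearMap.ker_le_comap m)] at hinf
  omega

/-- A projection of the polynomial ring onto a subspace `U` that preserves degrees, for instance
the projection to an isotypic part for a group acting by permutations of the variables. -/
structure IsHomogeneousProj (U : Submodule K (MvPolynomial σ K))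
    (π : MvPolynomial σ K →ₗ[K] MvPolynomial σ K) : Prop extends LinearMap.IsProj U π where
  isHomogeneous_apply {p : MvPolynomial σ K} {d : ℕ} (hp : p.IsHomogeneous d) :
    (π p).IsHomogeneous d

theorem isHomogeneousProj_id :
    IsHomogeneousProj (⊤ : Submodule K (MvPolynomial σ K)) LinearMap.id where
  map_mem _ := trivial
  map_id _ _ := rfl
  isHomogeneous_apply hp := hp

/-- The polynomials of degree `d` that lie both in the ideal `J` and in the subspace `U`. The
subspace is `⊤` for the graded pieces of `J` itself, or an isotypic part of the polynomial ring. -/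
noncomputable def gradedPiece (U : Submodule K (MvPolynomial σ K)) (J : Ideal (MvPolynomial σ K))
    (d : ℕ) : Submodule K (MvPolynomial σ K) :=
  U ⊓ J.restrictScalars K ⊓ homogeneousSubmodule σ K d

variable {U : Submodule K (MvPolynomial σ K)} {π : MvPolynomial σ K →ₗ[K] MvPolynomial σ K}
  {J : Ideal (MvPolynomial σ K)} {f : MvPolynomial σ K} {d e : ℕ}

theorem mem_gradedPiece {p : MvPolynomial σ K} :
    p ∈ gradedPiece U J d ↔ (p ∈ U ∧ p ∈ J) ∧ p.IsHomogeneous d := Iff.rfl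

theorem gradedPiece_mono {I : Ideal (MvPolynomial σ K)} (h : I ≤ J) :
    gradedPiece U I d ≤ gradedPiece U J d :=
  fun _ hp => ⟨⟨hp.1.1, h hp.1.2⟩, hp.2⟩

theorem le_of_gradedPiece_le {I : Ideal (MvPolynomial σ K)}
    (hI : I.IsHomogeneous (homogeneousSubmodule σ K))
    (h : ∀ d, gradedPiece ⊤ I d ≤ gradedPiece ⊤ J d) : I ≤ J := by
  intro p hp
  rw [← sum_homogeneousComponent p]
  exact J.sum_mem fun n _ => (h n ⟨⟨trivial, homogeneousComponent_mem_of_mem hI hp n⟩,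
    homogeneousComponent_isHomogeneous n p⟩).1.2

theorem IsHomogeneousProj.mul_mem (hπ : IsHomogeneousProj U π) (hπf : ∀ u, π (u * f) = π u * f)
    {u : MvPolynomial σ K} (hu : u ∈ U) : u * f ∈ U := by
  rw [← hπ.map_id u hu, ← hπf]
  exact hπ.map_mem _

theorem gradedPiece_sup_span_add (hπ : IsHomogeneousProj U π) (hπf : ∀ u, π (u * f) = π u * f)
    (hπJ : ∀ p ∈ J, π p ∈ J) (hJ : J.IsHomogeneous (homogeneousSubmodule σ K))
    (hf : f.IsHomogeneous e) (d : ℕ) :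
    gradedPiece U (J ⊔ Ideal.span {f}) (d + e) =
      gradedPiece U J (d + e) ⊔ (gradedPiece U ⊤ d).map (LinearMap.mulRight K f) := by
  refine le_antisymm ?_ (sup_le (gradedPiece_mono le_sup_left) ?_)
  · rintro p ⟨⟨hpU, hp⟩, hpd⟩
    obtain ⟨x, hx, y, hy, rfl⟩ := Submodule.mem_sup.1 hp
    obtain ⟨u, rfl⟩ := Ideal.mem_span_singleton'.1 hy
    have hsplit : π (homogeneousComponent (d + e) x) + π (homogeneousComponent d u) * f =
        x + u * f := by
      rw [← hπf, ← homogeneousComponent_add_mul hf, ← map_add, ← map_add,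
        homogeneousComponent_eq_self hpd, hπ.map_id _ hpU]
    rw [← hsplit]
    exact Submodule.add_mem_sup
      ⟨⟨hπ.map_mem _, hπJ _ (homogeneousComponent_mem_of_mem hJ hx _)⟩,
        hπ.isHomogeneous_apply (homogeneousComponent_isHomogeneous _ _)⟩
      ⟨_, ⟨⟨hπ.map_mem _, trivial⟩,
        hπ.isHomogeneous_apply (homogeneousComponent_isHomogeneous d u)⟩, rfl⟩
  · rintro _ ⟨u, hu, rfl⟩
    exact ⟨⟨hπ.mul_mem hπf hu.1.1,
      Ideal.mem_sup_right (Ideal.mul_mem_left _ _ (Ideal.mem_span_singleton_self f))⟩, hu.2.mul hf⟩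

theorem gradedPiece_sup_span_of_lt (hJ : J.IsHomogeneous (homogeneousSubmodule σ K))
    (hf : f.IsHomogeneous e) (hd : d < e) :
    gradedPiece U (J ⊔ Ideal.span {f}) d = gradedPiece U J d := by
  refine le_antisymm ?_ (gradedPiece_mono le_sup_left)
  rintro p ⟨⟨hpU, hp⟩, hpd⟩
  refine ⟨⟨hpU, ?_⟩, hpd⟩
  obtain ⟨x, hx, y, hy, rfl⟩ := Submodule.mem_sup.1 hp
  obtain ⟨u, rfl⟩ := Ideal.mem_span_singleton'.1 hy
  rw [← homogeneousComponent_eq_self hpd, map_add, homogeneousComponent_mul_of_lt hf u hd, add_zero]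
  exact homogeneousComponent_mem_of_mem hJ hx d

theorem gradedPiece_inf_comap_mulRight (hπ : IsHomogeneousProj U π)
    (hπf : ∀ u, π (u * f) = π u * f) (hf : f.IsHomogeneous e) (d : ℕ) :
    gradedPiece U ⊤ d ⊓ (gradedPiece U J (d + e)).comap (LinearMap.mulRight K f) =
      gradedPiece U (J.colon {f}) d := by
  ext u
  simp only [Submodule.mem_inf, Submodule.mem_comap, LinearMap.mulRight_apply, mem_gradedPiece,
    Submodule.mem_colon_singleton, smul_eq_mul, Submodule.mem_top, and_true]
  exact ⟨fun h => ⟨⟨h.1.1, h.2.1.2⟩, h.1.2⟩,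
    fun h => ⟨⟨h.1.1, h.2⟩, ⟨hπ.mul_mem hπf h.1.1, h.1.2⟩, h.2.mul hf⟩⟩

/-- The Hilbert series of the image of `U` in the quotient of the polynomial ring by `J`. -/
noncomputable def hilbertSeries (U : Submodule K (MvPolynomial σ K))
    (J : Ideal (MvPolynomial σ K)) : PowerSeries ℤ :=
  PowerSeries.mk fun d =>
    (Module.finrank K (gradedPiece U ⊤ d) : ℤ) - Module.finrank K (gradedPiece U J d)

theorem coeff_hilbertSeries (U : Submodule K (MvPolynomial σ K)) (J : Ideal (MvPolynomial σ K))
    (d : ℕ) : PowerSeries.coeff d (hilbertSeries U J) =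
      (Module.finrank K (gradedPiece U ⊤ d) : ℤ) - Module.finrank K (gradedPiece U J d) :=
  PowerSeries.coeff_mk _ _

variable [Finite σ]

instance (d : ℕ) : FiniteDimensional K (homogeneousSubmodule σ K d) :=
  Module.Finite.iff_fg.2 (homogeneousSubmodule_fg σ K d)

instance (U : Submodule K (MvPolynomial σ K)) (J : Ideal (MvPolynomial σ K)) (d : ℕ) :
    FiniteDimensional K (gradedPiece U J d) :=
  Submodule.finiteDimensional_of_le inf_le_right

theorem coeff_hilbertSeries_anti {I : Ideal (MvPolynomial σ K)} (h : I ≤ J) (d : ℕ) :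
    PowerSeries.coeff d (hilbertSeries U J) ≤ PowerSeries.coeff d (hilbertSeries U I) := by
  have := Submodule.finrank_mono (gradedPiece_mono (U := U) (d := d) h)
  rw [coeff_hilbertSeries, coeff_hilbertSeries]
  omega

theorem coeff_hilbertSeries_nonneg (d : ℕ) : 0 ≤ PowerSeries.coeff d (hilbertSeries U J) := by
  simpa [coeff_hilbertSeries] using coeff_hilbertSeries_anti (U := U) (le_top (a := J)) d

theorem eq_of_le_of_hilbertSeries_eq {I : Ideal (MvPolynomial σ K)}
    (hJ : J.IsHomogeneous (homogeneousSubmodule σ K)) (hIJ : I ≤ J)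
    (h : hilbertSeries ⊤ I = hilbertSeries ⊤ J) : I = J :=
  le_antisymm hIJ <| le_of_gradedPiece_le hJ fun d => by
    refine (Submodule.eq_of_le_of_finrank_eq (gradedPiece_mono hIJ) ?_).ge
    simpa [coeff_hilbertSeries] using congrArg (PowerSeries.coeff d) h

theorem hilbertSeries_sup_span (hπ : IsHomogeneousProj U π) (hπf : ∀ u, π (u * f) = π u * f)
    (hπJ : ∀ p ∈ J, π p ∈ J) (hJ : J.IsHomogeneous (homogeneousSubmodule σ K))
    (hf : f.IsHomogeneous e) :
    hilbertSeries U (J ⊔ Ideal.span {f}) =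
      hilbertSeries U J - PowerSeries.X ^ e * hilbertSeries U (J.colon {f}) := by
  ext d
  rw [map_sub, PowerSeries.coeff_X_pow_mul', coeff_hilbertSeries, coeff_hilbertSeries]
  split_ifs with h
  · obtain ⟨d, rfl⟩ := Nat.exists_eq_add_of_le' h
    have := finrank_sup_map_add_finrank_inf_comap (LinearMap.mulRight K f)
      (gradedPiece U J (d + e)) (gradedPiece U ⊤ d)
    rw [← gradedPiece_sup_span_add hπ hπf hπJ hJ hf, gradedPiece_inf_comap_mulRight hπ hπf hf]
      at this
    rw [Nat.add_sub_cancel, coeff_hilbertSeries]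
    omega
  · rw [sub_zero, gradedPiece_sup_span_of_lt hJ hf (not_le.1 h)]

theorem hilbertSeries_sup_span_of_colon_eq (hπ : IsHomogeneousProj U π)
    (hπf : ∀ u, π (u * f) = π u * f) (hπJ : ∀ p ∈ J, π p ∈ J)
    (hJ : J.IsHomogeneous (homogeneousSubmodule σ K)) (hf : f.IsHomogeneous e)
    (h : J.colon {f} = J) :
    hilbertSeries U (J ⊔ Ideal.span {f}) = (1 - PowerSeries.X ^ e) * hilbertSeries U J := by
  rw [hilbertSeries_sup_span hπ hπf hπJ hJ hf, h, sub_mul, one_mul]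

theorem coeff_hilbertSeries_le_coeff_add (hπ : IsHomogeneousProj U π)
    (hπf : ∀ u, π (u * f) = π u * f) (hπJ : ∀ p ∈ J, π p ∈ J)
    (hJ : J.IsHomogeneous (homogeneousSubmodule σ K)) (hf : f.IsHomogeneous e)
    (h : ∀ u : MvPolynomial σ K, u.IsHomogeneous d → u * f ∈ J → u ∈ J) :
    PowerSeries.coeff d (hilbertSeries U J) ≤ PowerSeries.coeff (d + e) (hilbertSeries U J) := by
  have hcolon : gradedPiece U (J.colon {f}) d = gradedPiece U J d :=
    le_antisymm (fun u hu => ⟨⟨hu.1.1, h u hu.2 (Submodule.mem_colon_singleton.1 hu.1.2)⟩, hu.2⟩)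
      (gradedPiece_mono Ideal.le_colon)
  have hnonneg := coeff_hilbertSeries_nonneg (U := U) (J := J ⊔ Ideal.span {f}) (d + e)
  rw [hilbertSeries_sup_span hπ hπf hπJ hJ hf, map_sub, PowerSeries.coeff_X_pow_mul,
    coeff_hilbertSeries U (J.colon {f}), hcolon, ← coeff_hilbertSeries] at hnonneg
  exact sub_nonneg.1 hnonneg

end HilbertSeries

section LexNonneg

/-- Nonnegativity of a power series for the lexicographic order of its coefficients: the series is
zero or its lowest nonzero coefficient is positive. The order is borrowed from Hahn series, where
it is compatible with the ring structure. -/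
def LexNonneg (p : PowerSeries ℤ) : Prop :=
  0 ≤ toLex (HahnSeries.toPowerSeries.symm p)

theorem lexNonneg_iff {p : PowerSeries ℤ} :
    LexNonneg p ↔ p = 0 ∨
      ∃ n, (∀ m < n, PowerSeries.coeff m p = 0) ∧ 0 < PowerSeries.coeff n p := by
  simp [LexNonneg, le_iff_eq_or_lt, HahnSeries.lt_iff, eq_comm (a := (0 : ℤ)),
    eq_comm (a := (0 : Lex (HahnSeries ℕ ℤ)))]

theorem LexNonneg.of_coeff_nonneg {p : PowerSeries ℤ} (h : ∀ n, 0 ≤ PowerSeries.coeff n p) :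
    LexNonneg p := by
  refine lexNonneg_iff.2 <| or_iff_not_imp_left.2 fun hp => ?_
  exact ⟨p.order.toNat, fun m => PowerSeries.coeff_of_lt_order_toNat m,
    (h _).lt_of_ne (PowerSeries.coeff_order hp).symm⟩

theorem LexNonneg.add {p q : PowerSeries ℤ} (hp : LexNonneg p) (hq : LexNonneg q) :
    LexNonneg (p + q) := by
  simpa [LexNonneg] using add_nonneg hp hq

theorem LexNonneg.add_eq_zero_iff {p q : PowerSeries ℤ} (hp : LexNonneg p) (hq : LexNonneg q) :
    p + q = 0 ↔ p = 0 ∧ q = 0 := by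
  simpa [← toLex_add, ← map_add] using add_eq_zero_iff_of_nonneg hp hq

theorem LexNonneg.mul {p q : PowerSeries ℤ} (hp : LexNonneg p) (hq : LexNonneg q) :
    LexNonneg (p * q) := by
  simpa [LexNonneg] using mul_nonneg hp hq

theorem lexNonneg_X_pow (e : ℕ) : LexNonneg (PowerSeries.X ^ e) :=
  .of_coeff_nonneg fun n => by
    rw [PowerSeries.coeff_X_pow]
    split_ifs <;> simp

theorem lexNonneg_one_sub_X_pow {e : ℕ} (he : 0 < e) : LexNonneg (1 - PowerSeries.X ^ e) :=
  lexNonneg_iff.2 <| Or.inr ⟨0, by simp, by simp [he.ne']⟩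

theorem LexNonneg.coeff_eq_zero {p : PowerSeries ℤ} (hp : LexNonneg p) {d : ℕ}
    (h : ∀ n ≤ d, PowerSeries.coeff n p ≤ 0) : PowerSeries.coeff d p = 0 := by
  obtain rfl | ⟨n, hn, hpos⟩ := lexNonneg_iff.1 hp
  · exact map_zero _
  · exact hn d (lt_of_not_ge fun hnd => (h n hnd).not_gt hpos)

theorem one_sub_X_pow_ne_zero {e : ℕ} (he : 0 < e) :
    (1 - PowerSeries.X ^ e : PowerSeries ℤ) ≠ 0 := fun h => by
  simpa [he.ne'] using congrArg PowerSeries.constantCoeff h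

end LexNonneg

section CompleteIntersections

variable {σ K ι : Type*} [Field K]

theorem span_image_insert {R : Type*} [CommRing R] (f : ι → R) (i : ι) (s : Set ι) :
    Ideal.span (f '' insert i s) = Ideal.span (f '' s) ⊔ Ideal.span {f i} := by
  rw [Set.image_insert_eq, Ideal.span_insert, sup_comm]

theorem span_range_eq_sup {R : Type*} [CommRing R] (f : ι → R) (i : ι) :
    Ideal.span (Set.range f) = Ideal.span (f '' {i}ᶜ) ⊔ Ideal.span {f i} := by
  rw [← span_image_insert, ← Set.union_singleton, Set.compl_union_self, Set.image_univ]

theorem colon_eq_of_pow_mem_sup_span {R : Type*} [CommRing R] {J : Ideal R} {f g : R}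
    (h : J.colon {f} = J) {N : ℕ} (hN : f ^ N ∈ J ⊔ Ideal.span {g}) : J.colon {g} = J := by
  refine le_antisymm (fun u hu => ?_) Ideal.le_colon
  obtain ⟨x, hx, y, hy, hxy⟩ := Submodule.mem_sup.1 hN
  obtain ⟨v, rfl⟩ := Ideal.mem_span_singleton'.1 hy
  rw [Submodule.mem_colon_singleton, smul_eq_mul] at hu
  rw [← colon_singleton_pow_eq h N, Submodule.mem_colon_singleton, smul_eq_mul, ← hxy, mul_add,
    mul_left_comm]
  exact J.add_mem (J.mul_mem_left _ hx) (J.mul_mem_left _ hu)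

theorem colon_X_span_X_image {s : Set σ} {i : σ} (hi : i ∉ s) :
    (Ideal.span (X '' s : Set (MvPolynomial σ K))).colon {X i} = Ideal.span (X '' s) := by
  classical
  refine le_antisymm (fun u hu => ?_) Ideal.le_colon
  rw [Submodule.mem_colon_singleton, smul_eq_mul, mem_ideal_span_X_image] at hu
  refine mem_ideal_span_X_image.2 fun m hm => ?_
  obtain ⟨j, hj, hmj⟩ := hu (m + Finsupp.single i 1) (by simpa using hm)
  rw [Finsupp.add_apply, Finsupp.single_eq_of_ne (ne_of_mem_of_not_mem hj hi), add_zero] at hmj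
  exact ⟨j, hj, hmj⟩

/-- A family of forms `f i` of degrees `e i` is a complete intersection if the quotient by it has
the lexicographically smallest possible Hilbert series. -/
def IsCompleteIntersection [Fintype ι] (f : ι → MvPolynomial σ K) (e : ι → ℕ) : Prop :=
  hilbertSeries ⊤ (Ideal.span (Set.range f)) =
    (∏ i, (1 - PowerSeries.X ^ e i)) * hilbertSeries ⊤ (⊥ : Ideal (MvPolynomial σ K))

theorem IsCompleteIntersection.of_span_eq [Fintype ι] {f g : ι → MvPolynomial σ K}
    {e : ι → ℕ} (h : IsCompleteIntersection f e)
    (hfg : Ideal.span (Set.range g) = Ideal.span (Set.range f)) : IsCompleteIntersection g e := by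
  rwa [IsCompleteIntersection, hfg]

variable [Finite σ] {f : ι → MvPolynomial σ K} {e : ι → ℕ}

theorem lexNonneg_hilbertSeries_sub {I J : Ideal (MvPolynomial σ K)} (h : I ≤ J) :
    LexNonneg (hilbertSeries ⊤ I - hilbertSeries ⊤ J) :=
  .of_coeff_nonneg fun n => by
    rw [map_sub]
    exact sub_nonneg.2 (coeff_hilbertSeries_anti h n)

section SupSpan

variable {J : Ideal (MvPolynomial σ K)} (hJ : J.IsHomogeneous (homogeneousSubmodule σ K))
  {g : MvPolynomial σ K} {d : ℕ} (hg : g.IsHomogeneous d) {p : PowerSeries ℤ}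

include hJ hg

theorem hilbertSeries_sup_span_sub (p : PowerSeries ℤ) :
    hilbertSeries ⊤ (J ⊔ Ideal.span {g}) - (1 - PowerSeries.X ^ d) * p =
      (1 - PowerSeries.X ^ d) * (hilbertSeries ⊤ J - p) +
        PowerSeries.X ^ d * (hilbertSeries ⊤ J - hilbertSeries ⊤ (J.colon {g})) := by
  rw [hilbertSeries_sup_span isHomogeneousProj_id (fun _ => rfl) (fun _ hp => hp) hJ hg]
  ring

theorem lexNonneg_hilbertSeries_sup_span (hd : 0 < d) (hp : LexNonneg (hilbertSeries ⊤ J - p)) :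
    LexNonneg (hilbertSeries ⊤ (J ⊔ Ideal.span {g}) - (1 - PowerSeries.X ^ d) * p) :=
  hilbertSeries_sup_span_sub hJ hg p ▸ ((lexNonneg_one_sub_X_pow hd).mul hp).add
    ((lexNonneg_X_pow d).mul (lexNonneg_hilbertSeries_sub Ideal.le_colon))

theorem hilbertSeries_eq_and_colon_eq_of_hilbertSeries_sup_span_eq (hd : 0 < d)
    (hp : LexNonneg (hilbertSeries ⊤ J - p))
    (h : hilbertSeries ⊤ (J ⊔ Ideal.span {g}) = (1 - PowerSeries.X ^ d) * p) :
    hilbertSeries ⊤ J = p ∧ J.colon {g} = J := by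
  have hsum := hilbertSeries_sup_span_sub hJ hg p
  rw [h, sub_self, eq_comm, ((lexNonneg_one_sub_X_pow hd).mul hp).add_eq_zero_iff
    ((lexNonneg_X_pow d).mul (lexNonneg_hilbertSeries_sub Ideal.le_colon)),
    mul_eq_zero_iff_left (one_sub_X_pow_ne_zero hd),
    mul_eq_zero_iff_left (pow_ne_zero d PowerSeries.X_ne_zero), sub_eq_zero, sub_eq_zero] at hsum
  exact ⟨hsum.1, (eq_of_le_of_hilbertSeries_eq (isHomogeneous_colon_singleton hJ hg)
    Ideal.le_colon hsum.2).symm⟩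

end SupSpan

theorem lexNonneg_hilbertSeries_span_image (hf : ∀ i, (f i).IsHomogeneous (e i))
    (he : ∀ i, 0 < e i) (T : Finset ι) :
    LexNonneg (hilbertSeries ⊤ (Ideal.span (f '' T)) -
      (∏ i ∈ T, (1 - PowerSeries.X ^ e i)) * hilbertSeries ⊤ (⊥ : Ideal (MvPolynomial σ K))) := by
  classical
  induction T using Finset.induction_on with
  | empty => exact lexNonneg_iff.2 (Or.inl (by simp))
  | insert i T hi ih =>
    rw [Finset.coe_insert, span_image_insert, Finset.prod_insert hi, mul_assoc]
    exact lexNonneg_hilbertSeries_sup_span (isHomogeneous_ideal_span_image hf _) (hf i) (he i) ih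

theorem exists_pow_mem_span_range [IsAlgClosed K]
    (hf : ∀ x : σ → K, (∀ i, eval x (f i) = 0) → x = 0) {p : MvPolynomial σ K}
    (hp : eval 0 p = 0) : ∃ N, p ^ N ∈ Ideal.span (Set.range f) := by
  change p ∈ (Ideal.span (Set.range f)).radical
  rw [← vanishingIdeal_zeroLocus_eq_radical (K := K)]
  intro x hx
  rw [hf x fun i => by simpa using hx (f i) (Ideal.subset_span ⟨i, rfl⟩)]
  simpa using hp

variable [Fintype ι]

theorem lexNonneg_hilbertSeries_span_range (hf : ∀ i, (f i).IsHomogeneous (e i))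
    (he : ∀ i, 0 < e i) :
    LexNonneg (hilbertSeries ⊤ (Ideal.span (Set.range f)) -
      (∏ i, (1 - PowerSeries.X ^ e i)) * hilbertSeries ⊤ (⊥ : Ideal (MvPolynomial σ K))) := by
  simpa using lexNonneg_hilbertSeries_span_image hf he Finset.univ

theorem IsCompleteIntersection.erase [DecidableEq ι] (h : IsCompleteIntersection f e)
    (hf : ∀ i, (f i).IsHomogeneous (e i)) (he : ∀ i, 0 < e i) (i : ι) :
    hilbertSeries ⊤ (Ideal.span (f '' {i}ᶜ)) = (∏ j ∈ {i}ᶜ, (1 - PowerSeries.X ^ e j)) *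
        hilbertSeries ⊤ (⊥ : Ideal (MvPolynomial σ K)) ∧
      (Ideal.span (f '' {i}ᶜ)).colon {f i} = Ideal.span (f '' {i}ᶜ) := by
  refine hilbertSeries_eq_and_colon_eq_of_hilbertSeries_sup_span_eq
    (isHomogeneous_ideal_span_image hf _) (hf i) (he i) ?_ ?_
  · simpa using lexNonneg_hilbertSeries_span_image hf he {i}ᶜ
  · rw [← span_range_eq_sup, h, ← mul_assoc, Fintype.prod_eq_mul_prod_compl i]

theorem IsCompleteIntersection.update [DecidableEq ι] (h : IsCompleteIntersection f e)
    (hf : ∀ i, (f i).IsHomogeneous (e i)) (he : ∀ i, 0 < e i) (i : ι) {g : MvPolynomial σ K}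
    {d : ℕ} (hg : g.IsHomogeneous d) {N : ℕ}
    (hN : f i ^ N ∈ Ideal.span (Set.range (Function.update f i g))) :
    IsCompleteIntersection (Function.update f i g) (Function.update e i d) := by
  have himage : Function.update f i g '' {i}ᶜ = f '' {i}ᶜ :=
    Set.image_congr fun j hj => Function.update_of_ne hj g f
  have hprod : ∏ j ∈ {i}ᶜ, (1 - (PowerSeries.X : PowerSeries ℤ) ^ Function.update e i d j) =
      ∏ j ∈ {i}ᶜ, (1 - PowerSeries.X ^ e j) :=
    Finset.prod_congr rfl fun j hj => by rw [Function.update_of_ne (by simpa using hj)]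
  obtain ⟨hseries, hcolon⟩ := h.erase hf he i
  rw [span_range_eq_sup _ i, himage, Function.update_self] at hN
  rw [IsCompleteIntersection, span_range_eq_sup _ i, himage, Function.update_self,
    hilbertSeries_sup_span_of_colon_eq isHomogeneousProj_id (fun _ => rfl) (fun _ hp => hp)
      (isHomogeneous_ideal_span_image hf _) hg (colon_eq_of_pow_mem_sup_span hcolon hN),
    hseries, ← mul_assoc, Fintype.prod_eq_mul_prod_compl i, Function.update_self, hprod]

/-- The forms `f i` are exchanged for the forms `g i` one at a time. -/
theorem IsCompleteIntersection.of_mixed_zeros [IsAlgClosed K] {g : ι → MvPolynomial σ K}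
    {d : ι → ℕ} (h : IsCompleteIntersection f e) (hf : ∀ i, (f i).IsHomogeneous (e i))
    (he : ∀ i, 0 < e i) (hg : ∀ i, (g i).IsHomogeneous (d i)) (hd : ∀ i, 0 < d i)
    (hzero : ∀ (T : Finset ι) (x : σ → K), (∀ i ∈ T, eval x (g i) = 0) →
      (∀ i ∉ T, eval x (f i) = 0) → x = 0) : IsCompleteIntersection g d := by
  classical
  suffices ∀ T : Finset ι, IsCompleteIntersection (T.piecewise g f) (T.piecewise d e) by
    simpa using this Finset.univ
  intro T
  induction T using Finset.induction_on with
  | empty => simpa using h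
  | insert i T hi ih =>
    have hvanish : eval 0 (f i) = 0 := by
      rw [eval_zero, constantCoeff_eq]
      exact (hf i).coeff_eq_zero (by simpa using (he i).ne)
    obtain ⟨N, hN⟩ := exists_pow_mem_span_range (f := (insert i T).piecewise g f)
      (fun x hx => hzero (insert i T) x
        (fun j hj => by simpa only [Finset.piecewise_eq_of_mem _ _ _ hj] using hx j)
        fun j hj => by simpa only [Finset.piecewise_eq_of_notMem _ _ _ hj] using hx j) hvanish
    rw [Finset.piecewise_insert] at hN ⊢
    rw [Finset.piecewise_insert]
    refine ih.update (fun j => ?_) (fun j => ?_) i (hg i) (N := N) ?_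
    · by_cases hj : j ∈ T <;> simp [hj, hf, hg]
    · by_cases hj : j ∈ T <;> simp [hj, he, hd]
    · rwa [Finset.piecewise_eq_of_notMem _ _ _ hi]

theorem isCompleteIntersection_X [Fintype σ] :
    IsCompleteIntersection (X : σ → MvPolynomial σ K) (fun _ => 1) := by
  classical
  suffices ∀ T : Finset σ, hilbertSeries ⊤ (Ideal.span ((X : σ → MvPolynomial σ K) '' T)) =
      (∏ i ∈ T, (1 - PowerSeries.X ^ 1)) * hilbertSeries ⊤ (⊥ : Ideal (MvPolynomial σ K)) by
    simpa [IsCompleteIntersection] using this Finset.univ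
  intro T
  induction T using Finset.induction_on with
  | empty => simp
  | insert i T hi ih =>
    rw [Finset.coe_insert, span_image_insert, Finset.prod_insert hi, mul_assoc, ← ih]
    exact hilbertSeries_sup_span_of_colon_eq isHomogeneousProj_id (fun _ => rfl) (fun _ hp => hp)
      (isHomogeneous_ideal_span_image (isHomogeneous_X K) _) (isHomogeneous_X K i)
      (colon_X_span_X_image (by simpa using hi))

theorem isCompleteIntersection_X_pow [Fintype σ] [IsAlgClosed K] {b : ℕ} (hb : 0 < b) :
    IsCompleteIntersection (fun i : σ => (X i : MvPolynomial σ K) ^ b) (fun _ => b) := by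
  refine isCompleteIntersection_X.of_mixed_zeros (isHomogeneous_X K) (fun _ => one_pos)
    (isHomogeneous_X_pow · b) (fun _ => hb) fun T x hT hTc => funext fun i => ?_
  by_cases hi : i ∈ T
  · simpa [hb.ne'] using hT i hi
  · simpa using hTc i hi

end CompleteIntersections

section BinomialPowers

/-- The series `(1 - x * t) ^ c` in the variable `t`, for an exponent `c` in a binomial ring. -/
noncomputable def binomPow {A R : Type*} [CommRing A] [BinomialRing A] [CommRing R] [Algebra A R]
    (c : A) (x : R) : PowerSeries R :=
  PowerSeries.rescale (-x) (PowerSeries.binomialSeries R c)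

/-- The derivation of power series that applies `D` to the coefficients. -/
noncomputable def coeffDerivation {A R : Type*} [CommRing A] [CommRing R] [Algebra A R]
    (D : Derivation A R R) : Derivation A (PowerSeries R) (PowerSeries R) :=
  Derivation.mk'
    { toFun := fun f => PowerSeries.mk fun n => D (PowerSeries.coeff n f)
      map_add' := fun f g => by ext; simp
      map_smul' := fun c f => by ext; simp }
    fun f g => by
      ext n
      simp [PowerSeries.coeff_mul, Finset.sum_add_distrib,
        ← Finset.Nat.sum_antidiagonal_swap (f := fun p => PowerSeries.coeff p.1 g * _)]

variable {A R S : Type*} [CommRing A] [CommRing R] [Algebra A R] [CommRing S] [Algebra A S]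

theorem coeff_coeffDerivation (D : Derivation A R R) (f : PowerSeries R) (n : ℕ) :
    PowerSeries.coeff n (coeffDerivation D f) = D (PowerSeries.coeff n f) :=
  PowerSeries.coeff_mk n fun m => D (PowerSeries.coeff m f)

theorem derivation_prod_eq_sum_mul_prod {ι : Type*} (D : Derivation A R R) {f h : ι → R}
    (hD : ∀ i, D (f i) = h i * f i) (s : Finset ι) :
    D (∏ i ∈ s, f i) = (∑ i ∈ s, h i) * ∏ i ∈ s, f i := by
  classical
  induction s using Finset.induction_on with
  | empty => simp
  | insert i s hi ih =>
    rw [Finset.prod_insert hi, Finset.sum_insert hi, D.leibniz, ih, hD, smul_eq_mul, smul_eq_mul]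
    ring

variable [BinomialRing A]

theorem coeff_binomPow (c : A) (x : R) (n : ℕ) :
    PowerSeries.coeff n (binomPow c x) = Ring.choose c n • (-x) ^ n := by
  simp [binomPow]

theorem binomPow_zero (x : R) : binomPow (0 : A) x = 1 := by
  simp [binomPow]

theorem binomPow_add (c d : A) (x : R) : binomPow (c + d) x = binomPow c x * binomPow d x := by
  simp [binomPow]

theorem binomPow_natCast (n : ℕ) (x : R) :
    binomPow (n : A) x = (1 - PowerSeries.C x * PowerSeries.X) ^ n := by
  simp [binomPow, PowerSeries.rescale_X, sub_eq_add_neg]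

theorem binomPow_nsmul (m : ℕ) (c : A) (x : R) : binomPow (m • c) x = binomPow c x ^ m := by
  induction m with
  | zero => simp [binomPow_zero]
  | succ m ih => rw [succ_nsmul, binomPow_add, ih, pow_succ]

theorem one_sub_mul_binomPow_neg_one (x : R) :
    (1 - PowerSeries.C x * PowerSeries.X) * binomPow (-1 : A) x = 1 := by
  rw [← pow_one (1 - _), ← binomPow_natCast (A := A), ← binomPow_add, Nat.cast_one, add_neg_cancel,
    binomPow_zero]

theorem map_binomPow (φ : R →ₐ[A] S) (c : A) (x : R) :
    PowerSeries.map (φ : R →+* S) (binomPow c x) = binomPow c (φ x) := by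
  ext n
  simp [coeff_binomPow]

theorem succ_smul_choose_succ (c : A) (n : ℕ) :
    (n + 1) • Ring.choose c (n + 1) = c * Ring.choose (c - 1) n := by
  simpa using Ring.choose_smul_choose c (Nat.le_add_left 1 n)

theorem derivative_binomPow (c : A) (x : R) :
    PowerSeries.derivative R (binomPow c x) =
      -PowerSeries.C (c • x) * binomPow (-1 : A) x * binomPow c x := by
  rw [mul_assoc, ← binomPow_add, neg_add_eq_sub]
  ext n
  rw [PowerSeries.coeff_derivative, neg_mul, map_neg, PowerSeries.coeff_C_mul, coeff_binomPow,
    coeff_binomPow, mul_comm, ← Nat.cast_succ, ← nsmul_eq_mul, ← smul_assoc,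
    succ_smul_choose_succ, smul_mul_smul_comm, pow_succ', neg_mul, smul_neg]

theorem coeffDerivation_binomPow (D : Derivation A R R) (c : A) (x : R) :
    coeffDerivation D (binomPow c x) =
      -PowerSeries.C (c • D x) * PowerSeries.X * binomPow (-1 : A) x * binomPow c x := by
  rw [mul_assoc, ← binomPow_add, neg_add_eq_sub, mul_assoc]
  ext n
  rw [coeff_coeffDerivation, neg_mul, map_neg, PowerSeries.coeff_C_mul, coeff_binomPow]
  cases n with
  | zero => simp
  | succ n =>
    rw [PowerSeries.coeff_succ_X_mul, coeff_binomPow, D.map_smul, D.leibniz_pow,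
      Nat.add_sub_cancel, map_neg, smul_comm, ← smul_assoc, succ_smul_choose_succ,
      smul_mul_smul_comm, smul_neg, smul_neg, smul_eq_mul, mul_comm (D x)]

end BinomialPowers

section GeneratingSeries

variable {A σ : Type*} [CommRing A]

theorem isHomogeneous_coeff_one (n : ℕ) :
    (PowerSeries.coeff n (1 : PowerSeries (MvPolynomial σ A))).IsHomogeneous n := by
  rw [PowerSeries.coeff_one]
  split_ifs with h
  · exact h ▸ isHomogeneous_one σ A
  · exact isHomogeneous_zero σ A n

theorem isHomogeneous_coeff_mul {f g : PowerSeries (MvPolynomial σ A)}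
    (hf : ∀ n, (PowerSeries.coeff n f).IsHomogeneous n)
    (hg : ∀ n, (PowerSeries.coeff n g).IsHomogeneous n) (n : ℕ) :
    (PowerSeries.coeff n (f * g)).IsHomogeneous n := by
  rw [PowerSeries.coeff_mul]
  refine IsHomogeneous.sum _ _ _ fun p hp => ?_
  rw [← Finset.HasAntidiagonal.mem_antidiagonal.1 hp]
  exact (hf _).mul (hg _)

variable [BinomialRing A]

variable (σ) in
/-- The series `∏ j, (1 - X j * t) ^ c` in the variable `t`. -/
noncomputable def prodSeries [Fintype σ] (c : A) : PowerSeries (MvPolynomial σ A) :=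
  ∏ j, binomPow c (X j)

/-- The series `(∏ j, (1 - X j * t) ^ c) / (1 - X l * t)` in the variable `t`. -/
noncomputable def genSeries [Fintype σ] (c : A) (l : σ) : PowerSeries (MvPolynomial σ A) :=
  prodSeries σ c * binomPow (-1 : A) (X l)

theorem isHomogeneous_coeff_binomPow (c : A) (i : σ) (n : ℕ) :
    (PowerSeries.coeff n (binomPow c (X i : MvPolynomial σ A))).IsHomogeneous n := by
  rw [coeff_binomPow, smul_eq_C_mul]
  simpa using ((isHomogeneous_X A i).neg.pow n).C_mul (Ring.choose c n)

variable [Fintype σ]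

theorem isHomogeneous_coeff_prodSeries (c : A) (n : ℕ) :
    (PowerSeries.coeff n (prodSeries σ c)).IsHomogeneous n := by
  refine Finset.prod_induction (fun j => binomPow c (X j : MvPolynomial σ A))
    (fun f => ∀ n, (PowerSeries.coeff n f).IsHomogeneous n)
    (fun _ _ => isHomogeneous_coeff_mul) isHomogeneous_coeff_one
    (fun j _ => isHomogeneous_coeff_binomPow c j) n

theorem isHomogeneous_coeff_genSeries (c : A) (l : σ) (n : ℕ) :
    (PowerSeries.coeff n (genSeries c l)).IsHomogeneous n :=
  isHomogeneous_coeff_mul (isHomogeneous_coeff_prodSeries c) (isHomogeneous_coeff_binomPow (-1) l) n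

theorem map_prodSeries {R : Type*} [CommRing R] [Algebra A R] (φ : MvPolynomial σ A →ₐ[A] R)
    (c : A) : PowerSeries.map (φ : MvPolynomial σ A →+* R) (prodSeries σ c) =
      ∏ j, binomPow c (φ (X j)) := by
  simp_rw [prodSeries, map_prod, map_binomPow]

theorem map_genSeries {R : Type*} [CommRing R] [Algebra A R] (φ : MvPolynomial σ A →ₐ[A] R)
    (c : A) (l : σ) : PowerSeries.map (φ : MvPolynomial σ A →+* R) (genSeries c l) =
      (∏ j, binomPow c (φ (X j))) * binomPow (-1 : A) (φ (X l)) := by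
  rw [genSeries, map_mul, map_prodSeries, map_binomPow]

theorem rename_coeff_genSeries (c : A) (w : Equiv.Perm σ) (l : σ) (n : ℕ) :
    rename w (PowerSeries.coeff n (genSeries c l)) = PowerSeries.coeff n (genSeries c (w l)) := by
  have h := congrArg (PowerSeries.coeff n) (map_genSeries (rename w) c l)
  simp_rw [rename_X, Equiv.prod_comp w fun j => binomPow c (X j : MvPolynomial σ A)] at h
  rwa [PowerSeries.coeff_map] at h

theorem one_sub_mul_genSeries (c : A) (l : σ) :
    (1 - PowerSeries.C (X l) * PowerSeries.X) * genSeries c l = prodSeries σ c := by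
  rw [genSeries, mul_left_comm, one_sub_mul_binomPow_neg_one, mul_one]

theorem coeff_succ_genSeries (c : A) (l : σ) (n : ℕ) :
    PowerSeries.coeff (n + 1) (genSeries c l) =
      PowerSeries.coeff (n + 1) (prodSeries σ c) + X l * PowerSeries.coeff n (genSeries c l) := by
  rw [← one_sub_mul_genSeries c l, sub_mul, one_mul, mul_assoc, map_sub, PowerSeries.coeff_C_mul,
    PowerSeries.coeff_succ_X_mul]
  ring

theorem derivative_prodSeries (c : A) :
    PowerSeries.derivative _ (prodSeries σ c) =
      -PowerSeries.C (C c) * ∑ l, PowerSeries.C (X l) * genSeries c l := by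
  rw [prodSeries, derivation_prod_eq_sum_mul_prod _ fun j => derivative_binomPow c (X j),
    Finset.mul_sum, Finset.sum_mul]
  refine Finset.sum_congr rfl fun l _ => ?_
  rw [genSeries, prodSeries, smul_eq_C_mul, map_mul]
  ring

theorem natCast_mul_coeff_prodSeries_succ (c : A) (n : ℕ) :
    ((n + 1 : ℕ) : MvPolynomial σ A) * PowerSeries.coeff (n + 1) (prodSeries σ c) =
      -C c * ∑ l, X l * PowerSeries.coeff n (genSeries c l) := by
  have h := congrArg (PowerSeries.coeff n) (derivative_prodSeries (σ := σ) c)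
  simp only [PowerSeries.coeff_derivative, neg_mul, map_neg, PowerSeries.coeff_C_mul, map_sum] at h
  rw [Nat.cast_succ, mul_comm, h, neg_mul]

theorem C_mul_sum_coeff_genSeries (c : A) (n : ℕ) :
    C c * ∑ l : σ, PowerSeries.coeff (n + 1) (genSeries c l) =
      C (c * Fintype.card σ - (n + 1 : ℕ)) * PowerSeries.coeff (n + 1) (prodSeries σ c) := by
  simp only [coeff_succ_genSeries, Finset.sum_add_distrib, Finset.sum_const, Finset.card_univ,
    nsmul_eq_mul, map_sub, map_mul, map_natCast]
  linear_combination natCast_mul_coeff_prodSeries_succ (σ := σ) c n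

theorem coeffDerivation_pderiv_prodSeries (i : σ) (c : A) :
    coeffDerivation (pderiv i) (prodSeries σ c) =
      -PowerSeries.C (C c) * PowerSeries.X * genSeries c i := by
  classical
  rw [prodSeries, derivation_prod_eq_sum_mul_prod _
    fun j => coeffDerivation_binomPow (pderiv i) c (X j), Finset.sum_eq_single i, genSeries,
    prodSeries, pderiv_X_self, smul_eq_C_mul, mul_one]
  · ring
  · intro j _ hj
    simp [pderiv_X_of_ne hj]
  · simp

theorem coeffDerivation_pderiv_genSeries_self (c : A) (l : σ) :
    coeffDerivation (pderiv l) (genSeries c l) =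
      PowerSeries.C (C (1 - c)) * (PowerSeries.X * (genSeries c l * binomPow (-1 : A) (X l))) := by
  rw [genSeries, Derivation.leibniz, coeffDerivation_pderiv_prodSeries, coeffDerivation_binomPow,
    genSeries, pderiv_X_self]
  simp only [smul_eq_mul, neg_smul, one_smul, map_sub, map_one, map_neg]
  ring

theorem coeffDerivation_pderiv_genSeries_of_ne (c : A) {i l : σ} (h : l ≠ i) :
    coeffDerivation (pderiv i) (genSeries c l) =
      -PowerSeries.C (C c) * (PowerSeries.X * (genSeries c l * binomPow (-1 : A) (X i))) := by
  rw [genSeries, Derivation.leibniz, coeffDerivation_pderiv_prodSeries, coeffDerivation_binomPow,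
    genSeries, pderiv_X_of_ne h]
  simp only [smul_eq_mul, smul_zero, map_zero]
  ring

theorem genSeries_sub_genSeries (c : A) (l j : σ) :
    genSeries c l - genSeries c j = PowerSeries.C (X l - X j) *
      (PowerSeries.X * (genSeries c l * binomPow (-1 : A) (X j))) := by
  have hl := one_sub_mul_binomPow_neg_one (A := A) (X l : MvPolynomial σ A)
  have hj := one_sub_mul_binomPow_neg_one (A := A) (X j : MvPolynomial σ A)
  rw [genSeries, genSeries, map_sub]
  linear_combination prodSeries σ c * binomPow (-1 : A) (X j) * hl -
    prodSeries σ c * binomPow (-1 : A) (X l) * hj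

theorem X_mul_derivative_genSeries (c : A) (l : σ) :
    PowerSeries.X * PowerSeries.derivative _ (genSeries c l) =
      PowerSeries.C (C (c * Fintype.card σ - 1)) * genSeries c l +
        genSeries c l * binomPow (-1 : A) (X l) -
          PowerSeries.C (C c) * ∑ j, genSeries c l * binomPow (-1 : A) (X j) := by
  have hterm (j : σ) : PowerSeries.C (X j) * PowerSeries.X *
      (genSeries c l * binomPow (-1 : A) (X j)) =
        genSeries c l * binomPow (-1 : A) (X j) - genSeries c l := by
    linear_combination
      -genSeries c l * one_sub_mul_binomPow_neg_one (A := A) (X j : MvPolynomial σ A)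
  have hsum : PowerSeries.X * PowerSeries.derivative _ (genSeries c l) =
      PowerSeries.C (X l) * PowerSeries.X * (genSeries c l * binomPow (-1 : A) (X l)) -
        PowerSeries.C (C c) * ∑ j, PowerSeries.C (X j) * PowerSeries.X *
          (genSeries c l * binomPow (-1 : A) (X j)) := by
    rw [genSeries, Derivation.leibniz, derivative_prodSeries, derivative_binomPow]
    simp only [genSeries, Finset.mul_sum, smul_eq_mul, neg_smul, one_smul, map_neg, mul_add,
      sub_eq_add_neg, ← Finset.sum_neg_distrib]
    congr 1
    · ring
    · exact Finset.sum_congr rfl fun j _ => by ring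
  rw [hsum, hterm]
  simp only [hterm, Finset.sum_sub_distrib, Finset.sum_const, Finset.card_univ, nsmul_eq_mul,
    map_sub, map_mul, map_natCast, map_one]
  ring

end GeneratingSeries

section SingularVectors

theorem count_roots_one_sub_C_mul_X {K : Type*} [Field K] [DecidableEq K] (x : K) {u : K}
    (hu : u ≠ 0) :
    (1 - Polynomial.C x * Polynomial.X).roots.count u⁻¹ = if x = u then 1 else 0 := by
  rcases eq_or_ne x 0 with rfl | hx
  · simp [hu.symm]
  · have hfactor : (1 - Polynomial.C x * Polynomial.X) =
        Polynomial.C (-x) * (Polynomial.X - Polynomial.C x⁻¹) := by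
      rw [mul_sub, ← Polynomial.C_mul, neg_mul, mul_inv_cancel₀ hx]
      simp [add_comm, sub_eq_add_neg]
    rw [hfactor, Polynomial.roots_C_mul _ (neg_ne_zero.2 hx), Polynomial.roots_X_sub_C,
      Multiset.count_singleton]
    simp [eq_comm]

/-- Compare multiplicities at the root `(x l)⁻¹`: the number of `j` with `x j = x l` times `b` is
divisible by the number of variables. -/
theorem eq_of_pow_card_eq_prod_pow {K σ : Type*} [Field K] [Fintype σ] {b : ℕ}
    (hab : (Fintype.card σ).Coprime b) {x : σ → K} {p : Polynomial K}
    (hp : p ^ Fintype.card σ = (∏ j, (1 - Polynomial.C (x j) * Polynomial.X)) ^ b)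
    {l : σ} (hl : x l ≠ 0) (j : σ) : x j = x l := by
  classical
  have hne (j : σ) : 1 - Polynomial.C (x j) * Polynomial.X ≠ 0 := fun h => by
    simpa using congrArg (Polynomial.eval 0) h
  have hcount := congrArg (fun q => q.roots.count (x l)⁻¹) hp
  simp only [Polynomial.roots_pow, Multiset.count_nsmul] at hcount
  rw [Polynomial.roots_prod _ _ (Finset.prod_ne_zero_iff.2 fun j _ => hne j),
    Multiset.count_bind] at hcount
  simp only [count_roots_one_sub_C_mul_X _ hl] at hcount
  rw [← Finset.sum_eq_multiset_sum, Finset.sum_boole, Nat.cast_id] at hcount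
  have hle : Fintype.card σ ≤ (Finset.univ.filter fun j => x j = x l).card :=
    Nat.le_of_dvd (Finset.card_pos.2 ⟨l, by simp⟩) (hab.dvd_of_dvd_mul_left (Dvd.intro _ hcount))
  exact Finset.filter_card_eq (le_antisymm (Finset.card_le_univ _) hle) j (Finset.mem_univ j)

variable (K : Type*) {σ : Type*} [Field K] [Fintype σ]

variable (σ) in
/-- The sum of the variables. -/
noncomputable def varSum : MvPolynomial σ K := ∑ i, X i

variable (σ) in
/-- The parameter `b / a` of the Dunkl operators, where `a` is the number of variables. -/
noncomputable def dunklParameter (b : ℕ) : K := b / Fintype.card σ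

variable {K}

theorem isHomogeneous_varSum : (varSum K σ).IsHomogeneous 1 :=
  IsHomogeneous.sum _ _ _ fun i _ => isHomogeneous_X K i

theorem rename_varSum (w : Equiv.Perm σ) : rename w (varSum K σ) = varSum K σ := by
  simp_rw [varSum, map_sum, rename_X, Equiv.sum_comp w (X : σ → MvPolynomial σ K)]

theorem eval_varSum (x : σ → K) : eval x (varSum K σ) = ∑ i, x i := by
  simp [varSum]

variable [CharZero K]

variable (K) in
/-- The coefficient of `t ^ b` in `∏ j, (1 - X j * t) ^ (b / a)` divided by `1 - X l * t`, where `a`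
is the number of variables. The Dunkl operators with parameter `b / a` annihilate it. -/
noncomputable def singularVector (b : ℕ) (l : σ) : MvPolynomial σ K :=
  PowerSeries.coeff b (genSeries (dunklParameter K σ b) l)

variable (K) in
/-- The singular vectors, shifted so as to have no common zero; the symmetric group permutes
them. -/
noncomputable def theta (b : ℕ) (l : σ) : MvPolynomial σ K :=
  singularVector K b l + varSum K σ ^ b

theorem isHomogeneous_singularVector (b : ℕ) (l : σ) : (singularVector K b l).IsHomogeneous b :=
  isHomogeneous_coeff_genSeries _ l b

theorem isHomogeneous_theta (b : ℕ) (l : σ) : (theta K b l).IsHomogeneous b :=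
  (isHomogeneous_singularVector b l).add (by simpa using isHomogeneous_varSum.pow b)

theorem rename_singularVector (b : ℕ) (w : Equiv.Perm σ) (l : σ) :
    rename w (singularVector K b l) = singularVector K b (w l) :=
  rename_coeff_genSeries _ w l b

theorem rename_theta (b : ℕ) (w : Equiv.Perm σ) (l : σ) :
    rename w (theta K b l) = theta K b (w l) := by
  rw [theta, map_add, map_pow, rename_varSum, rename_singularVector, theta]

theorem eval_coeff_prodSeries (x : σ → K) (c : K) (n : ℕ) :
    eval x (PowerSeries.coeff n (prodSeries σ c)) =
      PowerSeries.coeff n (∏ j, binomPow c (x j)) := by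
  have h := congrArg (PowerSeries.coeff n) (map_prodSeries (aeval x : MvPolynomial σ K →ₐ[K] K) c)
  simpa only [PowerSeries.coeff_map, aeval_X, coe_aeval_eq_eval] using h

theorem eval_coeff_genSeries (x : σ → K) (c : K) (l : σ) (n : ℕ) :
    eval x (PowerSeries.coeff n (genSeries c l)) =
      PowerSeries.coeff n ((∏ j, binomPow c (x j)) * binomPow (-1 : K) (x l)) := by
  have h := congrArg (PowerSeries.coeff n) (map_genSeries (aeval x : MvPolynomial σ K →ₐ[K] K) c l)
  simpa only [PowerSeries.coeff_map, aeval_X, coe_aeval_eq_eval] using h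

theorem eval_singularVector_congr (b : ℕ) {x : σ → K} {i j : σ} (h : x i = x j) :
    eval x (singularVector K b i) = eval x (singularVector K b j) := by
  rw [singularVector, singularVector, eval_coeff_genSeries, eval_coeff_genSeries, h]

/-- If all coefficients of `t ^ n` in the generating series vanish at `x`, then so do those of
higher powers of `t`, since `t d/dt` expresses each coefficient by the preceding ones. -/
theorem eval_coeff_succ_eq_zero {x : σ → K} {c : K} {n : ℕ}
    (hx : ∀ l, eval x (PowerSeries.coeff n (genSeries c l)) = 0) :
    eval x (PowerSeries.coeff (n + 1) (prodSeries σ c)) = 0 ∧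
      ∀ l, eval x (PowerSeries.coeff (n + 1) (genSeries c l)) = 0 := by
  have hprod : eval x (PowerSeries.coeff (n + 1) (prodSeries σ c)) = 0 := by
    have h := congrArg (eval x) (natCast_mul_coeff_prodSeries_succ (σ := σ) c n)
    simpa [hx, Nat.cast_add_one_ne_zero] using h
  exact ⟨hprod, fun l => by rw [coeff_succ_genSeries, map_add, hprod, map_mul, hx, mul_zero,
    zero_add]⟩

theorem eval_coeff_prodSeries_eq_zero {x : σ → K} {c : K} {b n : ℕ}
    (hx : ∀ l, eval x (PowerSeries.coeff b (genSeries c l)) = 0) (hn : b < n) :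
    eval x (PowerSeries.coeff n (prodSeries σ c)) = 0 := by
  have hgen {m : ℕ} (hm : b ≤ m) : ∀ l, eval x (PowerSeries.coeff m (genSeries c l)) = 0 := by
    induction m, hm using Nat.le_induction with
    | base => exact hx
    | succ m _ ih => exact (eval_coeff_succ_eq_zero ih).2
  obtain ⟨m, rfl⟩ := Nat.exists_eq_succ_of_ne_zero (Nat.ne_zero_of_lt hn)
  exact (eval_coeff_succ_eq_zero (hgen (Nat.le_of_lt_succ hn))).1

variable [Nonempty σ]

theorem card_nsmul_dunklParameter (b : ℕ) : Fintype.card σ • dunklParameter K σ b = b := by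
  rw [nsmul_eq_mul, dunklParameter,
    mul_div_cancel₀ _ (Nat.cast_ne_zero.2 Fintype.card_ne_zero)]

theorem sum_singularVector {b : ℕ} (hb : 0 < b) : ∑ l : σ, singularVector K b l = 0 := by
  obtain ⟨n, rfl⟩ := Nat.exists_eq_succ_of_ne_zero hb.ne'
  have hc : dunklParameter K σ (n + 1) * Fintype.card σ = (n + 1 : ℕ) := by
    rw [mul_comm, ← nsmul_eq_mul, card_nsmul_dunklParameter]
  have hc0 : dunklParameter K σ (n + 1) ≠ 0 :=
    left_ne_zero_of_mul (hc ▸ Nat.cast_ne_zero.2 n.succ_ne_zero)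
  have h := C_mul_sum_coeff_genSeries (σ := σ) (dunklParameter K σ (n + 1)) n
  rw [hc, sub_self, C_0, zero_mul] at h
  exact (mul_eq_zero.1 h).resolve_left (C_ne_zero.2 hc0)

/-- A common zero of the singular vectors makes `∏ j, (1 - x j * t) ^ (b / a)` a polynomial. -/
theorem eq_of_eval_singularVector_eq_zero {b : ℕ} (hab : (Fintype.card σ).Coprime b) {x : σ → K}
    (hx : ∀ l, eval x (singularVector K b l) = 0) {l : σ} (hl : x l ≠ 0) (j : σ) :
    x j = x l := by
  set c := dunklParameter K σ b
  set P : PowerSeries K := ∏ j, binomPow c (x j)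
  have htrunc : ((PowerSeries.trunc (b + 1) P : Polynomial K) : PowerSeries K) = P := by
    ext n
    rw [Polynomial.coeff_coe, PowerSeries.coeff_trunc]
    split_ifs with h
    · rfl
    · rw [← eval_coeff_prodSeries, eval_coeff_prodSeries_eq_zero hx (by lia)]
  refine eq_of_pow_card_eq_prod_pow hab (p := PowerSeries.trunc (b + 1) P) ?_ hl j
  apply Polynomial.coe_injective K
  rw [Polynomial.coe_pow, htrunc, Polynomial.coe_pow, ← Finset.prod_pow]
  simp_rw [← binomPow_nsmul, c, card_nsmul_dunklParameter, binomPow_natCast, Finset.prod_pow]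
  rw [← Polynomial.coeToPowerSeries.ringHom_apply, map_prod]
  simp

theorem eq_zero_of_eval_singularVector_eq_zero {b : ℕ} (hab : (Fintype.card σ).Coprime b)
    {x : σ → K} (hsum : eval x (varSum K σ) = 0) (hx : ∀ l, eval x (singularVector K b l) = 0) :
    x = 0 := by
  by_contra hne
  obtain ⟨l, hl⟩ := Function.ne_iff.1 hne
  rw [eval_varSum] at hsum
  simp only [eq_of_eval_singularVector_eq_zero hab hx hl, Finset.sum_const, Finset.card_univ,
    nsmul_eq_mul] at hsum
  exact hl ((mul_eq_zero.1 hsum).resolve_left (Nat.cast_ne_zero.2 Fintype.card_ne_zero))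

omit [Nonempty σ] in
theorem eval_singularVector_eq_zero_of_or {b : ℕ} (hb : 0 < b) {x : σ → K} (o : σ)
    (h : ∀ l, eval x (singularVector K b l) = 0 ∨ x l = x o) (l : σ) :
    eval x (singularVector K b l) = 0 := by
  classical
  have : Nonempty σ := ⟨o⟩
  obtain ⟨v, hval⟩ : ∃ v, ∀ l, eval x (singularVector K b l) = if x l = x o then v else 0 := by
    refine ⟨eval x (singularVector K b o), fun l => ?_⟩
    split_ifs with hl
    · exact eval_singularVector_congr b hl
    · exact (h l).resolve_right hl
  have hsum := congrArg (eval x) (sum_singularVector (K := K) (σ := σ) hb)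
  simp_rw [map_sum, hval, Finset.sum_ite, Finset.sum_const_zero, add_zero, Finset.sum_const,
    nsmul_eq_mul, map_zero] at hsum
  have hcard : ((Finset.univ.filter fun l => x l = x o).card : K) ≠ 0 :=
    Nat.cast_ne_zero.2 (Finset.card_ne_zero.2 ⟨o, by simp⟩)
  rw [hval, (mul_eq_zero.1 hsum).resolve_left hcard, ite_self]

end SingularVectors

section SingularIdeal

variable (K : Type*) {σ : Type*} [Field K] [CharZero K] [Fintype σ] {b : ℕ}

/-- The ideal generated by the singular vectors. -/
noncomputable def singularIdeal (σ : Type*) [Fintype σ] (b : ℕ) : Ideal (MvPolynomial σ K) :=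
  Ideal.span (Set.range (singularVector K b))

variable {K}

theorem isHomogeneous_ideal_singularIdeal :
    (singularIdeal K σ b).IsHomogeneous (homogeneousSubmodule σ K) := by
  rw [singularIdeal, ← Set.image_univ]
  exact isHomogeneous_ideal_span_image (isHomogeneous_singularVector b) _

theorem singularVector_mem_singularIdeal (l : σ) : singularVector K b l ∈ singularIdeal K σ b :=
  Ideal.subset_span ⟨l, rfl⟩

variable [Nonempty σ]

theorem span_range_theta (hb : 0 < b) :
    Ideal.span (Set.range (theta K b)) = singularIdeal K σ b ⊔ Ideal.span {varSum K σ ^ b} := by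
  set I := Ideal.span (Set.range (theta K b : σ → _)) with hI
  have hpow : varSum K σ ^ b ∈ I := by
    have hsum : ∑ l : σ, theta K b l ∈ I := I.sum_mem fun l _ => Ideal.subset_span ⟨l, rfl⟩
    simp only [theta, Finset.sum_add_distrib, sum_singularVector hb, zero_add, Finset.sum_const,
      Finset.card_univ, ← Nat.cast_smul_eq_nsmul K] at hsum
    exact (Submodule.smul_mem_iff (I.restrictScalars K)
      (Nat.cast_ne_zero.2 Fintype.card_ne_zero)).1 hsum
  apply le_antisymm
  · rw [hI, Ideal.span_le]
    rintro _ ⟨i, rfl⟩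
    exact Submodule.add_mem_sup (singularVector_mem_singularIdeal i)
      (Ideal.mem_span_singleton_self _)
  · refine sup_le ?_ ((Ideal.span_singleton_le_iff_mem _).2 hpow)
    rw [singularIdeal, Ideal.span_le]
    rintro _ ⟨i, rfl⟩
    simpa [theta] using I.sub_mem (Ideal.subset_span ⟨i, rfl⟩ : theta K b i ∈ I) hpow

omit [Nonempty σ]

theorem span_singularVector_image_compl [DecidableEq σ] (hb : 0 < b) (o : σ)
    (p : MvPolynomial σ K) :
    Ideal.span (Function.update (singularVector K b) o p '' {o}ᶜ) = singularIdeal K σ b := by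
  have : Nonempty σ := ⟨o⟩
  have himage : Function.update (singularVector K b) o p '' {o}ᶜ = singularVector K b '' {o}ᶜ :=
    Set.image_congr fun i hi => Function.update_of_ne hi _ _
  rw [himage]
  refine le_antisymm (Ideal.span_mono (Set.image_subset_range _ _)) ?_
  rw [singularIdeal, span_range_eq_sup _ o, sup_le_iff, Ideal.span_singleton_le_iff_mem]
  refine ⟨le_rfl, ?_⟩
  have hsum := sum_singularVector (K := K) (σ := σ) hb
  rw [Fintype.sum_eq_add_sum_compl o] at hsum
  rw [eq_neg_of_add_eq_zero_left hsum]
  exact neg_mem (sum_mem fun j hj => Ideal.subset_span ⟨j, by simpa using hj, rfl⟩)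

theorem isCompleteIntersection_sub_varSum [DecidableEq σ] (o : σ) :
    IsCompleteIntersection (Function.update (fun i => X i - X o) o (varSum K σ)) (fun _ => 1) := by
  have : Nonempty σ := ⟨o⟩
  set I := Ideal.span (Set.range (Function.update (fun i => X i - X o) o (varSum K σ)))
  have hsub (i : σ) : X i - X o ∈ I := by
    rcases eq_or_ne i o with rfl | hi
    · simp
    · exact Ideal.subset_span ⟨i, Function.update_of_ne hi _ _⟩
  have ho : X o ∈ I := by
    have h : varSum K σ - ∑ i, (X i - X o) ∈ I :=
      I.sub_mem (Ideal.subset_span ⟨o, Function.update_self _ _ _⟩) (I.sum_mem fun i _ => hsub i)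
    rw [varSum, Finset.sum_sub_distrib, sub_sub_cancel, Finset.sum_const, Finset.card_univ,
      ← Nat.cast_smul_eq_nsmul K] at h
    exact (Submodule.smul_mem_iff (I.restrictScalars K)
      (Nat.cast_ne_zero.2 Fintype.card_ne_zero)).1 h
  refine isCompleteIntersection_X.of_span_eq (le_antisymm ?_ ?_) <;> rw [Ideal.span_le] <;>
    rintro _ ⟨i, rfl⟩
  · have hX (i : σ) : X i ∈ Ideal.span (Set.range (X : σ → MvPolynomial σ K)) :=
      Ideal.subset_span ⟨i, rfl⟩
    rcases eq_or_ne i o with rfl | hi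
    · simpa [varSum] using sum_mem fun j _ => hX j
    · simpa [hi] using sub_mem (hX i) (hX o)
  · simpa using I.add_mem (hsub i) ho

variable [IsAlgClosed K]

theorem isCompleteIntersection_singularVector_varSum [DecidableEq σ] (hb : 0 < b)
    (hab : (Fintype.card σ).Coprime b) (o : σ) :
    IsCompleteIntersection (Function.update (singularVector K b) o (varSum K σ))
      (Function.update (fun _ => b) o 1) := by
  have : Nonempty σ := ⟨o⟩
  refine (isCompleteIntersection_sub_varSum o).of_mixed_zeros (fun i => ?_) (fun _ => one_pos)
    (fun i => ?_) (fun i => ?_) fun T x hT hTc => ?_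
  · rcases eq_or_ne i o with rfl | hi
    · simpa using isHomogeneous_varSum
    · simpa [hi] using (isHomogeneous_X K i).sub (isHomogeneous_X K o)
  · rcases eq_or_ne i o with rfl | hi
    · simpa using isHomogeneous_varSum
    · simpa [hi] using isHomogeneous_singularVector b i
  · rcases eq_or_ne i o with rfl | hi <;> simp [*]
  · refine eq_zero_of_eval_singularVector_eq_zero hab ?_
      (eval_singularVector_eq_zero_of_or hb o fun l => ?_)
    · by_cases ho : o ∈ T
      · simpa using hT o ho
      · simpa using hTc o ho
    · rcases eq_or_ne l o with rfl | hl
      · exact Or.inr rfl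
      · by_cases hlT : l ∈ T
        · exact Or.inl (by simpa [hl] using hT l hlT)
        · exact Or.inr (by simpa [hl, sub_eq_zero] using hTc l hlT)

variable [Nonempty σ]

theorem hilbertSeries_singularIdeal_and_colon_varSum (hb : 0 < b)
    (hab : (Fintype.card σ).Coprime b) :
    hilbertSeries ⊤ (singularIdeal K σ b) = (1 - PowerSeries.X ^ b) ^ (Fintype.card σ - 1) *
        hilbertSeries ⊤ (⊥ : Ideal (MvPolynomial σ K)) ∧
      (singularIdeal K σ b).colon {varSum K σ} = singularIdeal K σ b := by
  classical
  obtain ⟨o⟩ := ‹Nonempty σ›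
  have h := (isCompleteIntersection_singularVector_varSum (K := K) hb hab o).erase
    (fun i => ?_) (fun i => ?_) o
  · rw [span_singularVector_image_compl hb o, Function.update_self] at h
    refine ⟨h.1.trans ?_, h.2⟩
    rw [Finset.prod_congr rfl fun j hj => by rw [Function.update_of_ne (by simpa using hj)],
      Finset.prod_const, Finset.card_compl, Finset.card_singleton]
  · rcases eq_or_ne i o with rfl | hi
    · simpa using isHomogeneous_varSum
    · simpa [hi] using isHomogeneous_singularVector b i
  · rcases eq_or_ne i o with rfl | hi <;> simp [*]

theorem isCompleteIntersection_theta (hb : 0 < b) (hab : (Fintype.card σ).Coprime b) :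
    IsCompleteIntersection (theta K b : σ → MvPolynomial σ K) (fun _ => b) := by
  obtain ⟨hseries, hcolon⟩ := hilbertSeries_singularIdeal_and_colon_varSum (K := K) hb hab
  have hpow : (varSum K σ ^ b).IsHomogeneous b := by simpa using isHomogeneous_varSum.pow b
  rw [IsCompleteIntersection, span_range_theta hb,
    hilbertSeries_sup_span_of_colon_eq isHomogeneousProj_id (fun _ => rfl) (fun _ hp => hp)
      isHomogeneous_ideal_singularIdeal hpow (colon_singleton_pow_eq hcolon b), hseries,
    ← mul_assoc, ← pow_succ', Nat.sub_add_cancel Fintype.card_pos, Finset.prod_const,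
    Finset.card_univ]

end SingularIdeal

section Deformation

variable {K : Type*} [Field K]

theorem eventually_injective_id_add_sub_smul {V : Type*} [AddCommGroup V] [Module K V]
    [FiniteDimensional K V] (T : Module.End K V) (t₀ : K) :
    ∀ᶠ t : K in Filter.cofinite,
      Function.Injective (LinearMap.id + (t - t₀) • T : V →ₗ[K] V) := by
  refine ((Module.End.finite_hasEigenvalue T).image fun l => t₀ - l⁻¹).subset fun t ht => ?_
  obtain ⟨v, hv, hv0⟩ := (Submodule.ne_bot_iff _).1 (mt LinearMap.ker_eq_bot.1 ht)
  replace hv : v + (t - t₀) • T v = 0 := hv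
  have ht0 : t - t₀ ≠ 0 := fun h => hv0 (by simpa [h] using hv)
  have hTv : T v = -(t - t₀)⁻¹ • v := by
    rw [neg_smul, ← smul_neg, eq_inv_smul_iff₀ ht0, eq_neg_of_add_eq_zero_right hv]
  exact ⟨-(t - t₀)⁻¹, Module.End.hasEigenvalue_of_hasEigenvector
    ⟨Module.End.mem_eigenspace_iff.2 hTv, hv0⟩, by simp [inv_neg]⟩

theorem eventually_finrank_range_pencil_le {V W : Type*} [AddCommGroup V] [Module K V]
    [AddCommGroup W] [Module K W] (A B : V →ₗ[K] W)
    (hfin : ∀ t : K, FiniteDimensional K (LinearMap.range ((1 - t) • A + t • B))) (t₀ : K) :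
    ∀ᶠ t : K in Filter.cofinite,
      Module.finrank K (LinearMap.range ((1 - t₀) • A + t₀ • B)) ≤
        Module.finrank K (LinearMap.range ((1 - t) • A + t • B)) := by
  set N := (1 - t₀) • A + t₀ • B with hN
  have := hfin t₀
  obtain ⟨P, hP⟩ := N.rangeRestrict.exists_rightInverse_of_surjective N.range_rangeRestrict
  obtain ⟨S, hS⟩ := (LinearMap.range N).subtype.exists_leftInverse_of_injective
    (Submodule.ker_subtype _)
  have hSNP : S ∘ₗ N ∘ₗ P = LinearMap.id := by
    rw [← hS, ← LinearMap.comp_id (LinearMap.range N).subtype, ← hP]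
    rfl
  have hpencil (t : K) : S ∘ₗ ((1 - t) • A + t • B) ∘ₗ P =
      LinearMap.id + (t - t₀) • (S ∘ₗ (B - A) ∘ₗ P) := by
    have hline : (1 - t) • A + t • B = N + (t - t₀) • (B - A) := by
      rw [hN]
      module
    rw [hline, LinearMap.add_comp, LinearMap.comp_add, hSNP, LinearMap.smul_comp,
      LinearMap.comp_smul]
  filter_upwards [eventually_injective_id_add_sub_smul (S ∘ₗ (B - A) ∘ₗ P) t₀] with t ht
  rw [← hpencil] at ht
  have := hfin t
  rw [← LinearMap.finrank_range_of_inj ht, LinearMap.range_comp]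
  exact (Submodule.finrank_map_le _ _).trans
    (Submodule.finrank_mono (LinearMap.range_comp_le_range _ _))

variable {σ ι : Type*} {U : Submodule K (MvPolynomial σ K)}
  {π : MvPolynomial σ K →ₗ[K] MvPolynomial σ K} {J : Ideal (MvPolynomial σ K)}

theorem IsHomogeneousProj.gradedPiece_eq_map (hπ : IsHomogeneousProj U π)
    (hJ : J.IsHomogeneous (homogeneousSubmodule σ K)) (hπJ : ∀ p ∈ J, π p ∈ J) (d : ℕ) :
    gradedPiece U J d = (J.restrictScalars K).map (π ∘ₗ homogeneousComponent d) := by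
  ext p
  constructor
  · rintro ⟨⟨hpU, hpJ⟩, hpd⟩
    exact ⟨p, hpJ, by simp [homogeneousComponent_eq_self hpd, hπ.map_id p hpU]⟩
  · rintro ⟨p, hp, rfl⟩
    exact ⟨⟨hπ.map_mem _, hπJ _ (homogeneousComponent_mem_of_mem hJ hp d)⟩,
      hπ.isHomogeneous_apply (homogeneousComponent_isHomogeneous d p)⟩

theorem IsHomogeneousProj.ker (hπ : IsHomogeneousProj U π) :
    IsHomogeneousProj (LinearMap.ker π) (LinearMap.id - π) where
  map_mem p := by simp [hπ.map_id _ (hπ.map_mem p)]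
  map_id p hp := by simpa using hp
  isHomogeneous_apply hp := hp.sub (hπ.isHomogeneous_apply hp)

theorem IsHomogeneousProj.finrank_gradedPiece_add_ker [Finite σ] (hπ : IsHomogeneousProj U π)
    (hπJ : ∀ p ∈ J, π p ∈ J) (d : ℕ) :
    Module.finrank K (gradedPiece U J d) + Module.finrank K (gradedPiece (LinearMap.ker π) J d) =
      Module.finrank K (gradedPiece ⊤ J d) := by
  have hmap : (gradedPiece ⊤ J d).map π = gradedPiece U J d := by
    ext p
    constructor
    · rintro ⟨p, hp, rfl⟩
      exact ⟨⟨hπ.map_mem p, hπJ p hp.1.2⟩, hπ.isHomogeneous_apply hp.2⟩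
    · exact fun hp => ⟨p, ⟨⟨trivial, hp.1.2⟩, hp.2⟩, hπ.map_id p hp.1.1⟩
  have hker : gradedPiece ⊤ J d ⊓ LinearMap.ker π = gradedPiece (LinearMap.ker π) J d := by
    rw [gradedPiece, gradedPiece, top_inf_eq, inf_comm, inf_assoc]
  rw [← finrank_map_add_finrank_inf_ker π (gradedPiece ⊤ J d), hmap, hker]

theorem IsHomogeneousProj.hilbertSeries_add_ker [Finite σ] (hπ : IsHomogeneousProj U π)
    (hπJ : ∀ p ∈ J, π p ∈ J) :
    hilbertSeries U J + hilbertSeries (LinearMap.ker π) J = hilbertSeries ⊤ J := by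
  ext d
  have hJ := hπ.finrank_gradedPiece_add_ker hπJ d
  have htop := hπ.finrank_gradedPiece_add_ker (J := ⊤) (fun _ _ => trivial) d
  simp only [map_add, coeff_hilbertSeries]
  omega

/-- The ideal generated by the member with parameter `t` of the pencil through the families `f` and
`g`. -/
noncomputable def pencilIdeal (f g : ι → MvPolynomial σ K) (t : K) : Ideal (MvPolynomial σ K) :=
  Ideal.span (Set.range ((1 - t) • f + t • g))

variable {f g : ι → MvPolynomial σ K} {e : ι → ℕ}

theorem isHomogeneous_pencil (hf : ∀ i, (f i).IsHomogeneous (e i))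
    (hg : ∀ i, (g i).IsHomogeneous (e i)) (t : K) (i : ι) :
    (((1 - t) • f + t • g) i).IsHomogeneous (e i) :=
  (homogeneousSubmodule σ K (e i)).add_mem (Submodule.smul_mem _ _ (hf i))
    (Submodule.smul_mem _ _ (hg i))

theorem isHomogeneous_ideal_pencilIdeal (hf : ∀ i, (f i).IsHomogeneous (e i))
    (hg : ∀ i, (g i).IsHomogeneous (e i)) (t : K) :
    (pencilIdeal f g t).IsHomogeneous (homogeneousSubmodule σ K) := by
  rw [pencilIdeal, ← Set.image_univ]
  exact isHomogeneous_ideal_span_image (isHomogeneous_pencil hf hg t) _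

variable [Finite σ]

/-- The graded pieces are the ranges of linear maps that depend affinely on `t`, and rank is lower
semicontinuous. -/
theorem IsHomogeneousProj.eventually_coeff_hilbertSeries_pencilIdeal_le [Finite ι]
    (hπ : IsHomogeneousProj U π) (hf : ∀ i, (f i).IsHomogeneous (e i))
    (hg : ∀ i, (g i).IsHomogeneous (e i))
    (hstab : ∀ t, ∀ p ∈ pencilIdeal f g t, π p ∈ pencilIdeal f g t) (t₀ : K) (d : ℕ) :
    ∀ᶠ t : K in Filter.cofinite, PowerSeries.coeff d (hilbertSeries U (pencilIdeal f g t)) ≤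
      PowerSeries.coeff d (hilbertSeries U (pencilIdeal f g t₀)) := by
  have := Fintype.ofFinite ι
  let L (f : ι → MvPolynomial σ K) : (ι → MvPolynomial σ K) →ₗ[K] MvPolynomial σ K :=
    (π ∘ₗ homogeneousComponent d) ∘ₗ (Fintype.linearCombination _ f).restrictScalars K
  have hL (t : K) : L ((1 - t) • f + t • g) = (1 - t) • L f + t • L g := by
    ext1 u
    simp [L, Fintype.linearCombination_apply, Finset.smul_sum, Finset.sum_add_distrib, mul_add]
  have hrange (t : K) :
      gradedPiece U (pencilIdeal f g t) d = LinearMap.range ((1 - t) • L f + t • L g) := by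
    rw [hπ.gradedPiece_eq_map (isHomogeneous_ideal_pencilIdeal hf hg t) (hstab t), ← hL,
      LinearMap.range_comp, pencilIdeal, Ideal.span, ← Fintype.range_linearCombination]
    rfl
  filter_upwards [eventually_finrank_range_pencil_le (L f) (L g)
    (fun t => hrange t ▸ inferInstance) t₀] with t ht
  rw [← hrange, ← hrange] at ht
  rw [coeff_hilbertSeries, coeff_hilbertSeries]
  omega

variable [Fintype ι]

theorem IsCompleteIntersection.eventually_coeff_hilbertSeries_pencilIdeal_eq
    (hf : ∀ i, (f i).IsHomogeneous (e i)) (hg : ∀ i, (g i).IsHomogeneous (e i))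
    (he : ∀ i, 0 < e i) {t₀ : K} (h : IsCompleteIntersection ((1 - t₀) • f + t₀ • g) e) (d : ℕ) :
    ∀ᶠ t : K in Filter.cofinite, PowerSeries.coeff d (hilbertSeries ⊤ (pencilIdeal f g t)) =
      PowerSeries.coeff d (hilbertSeries ⊤ (pencilIdeal f g t₀)) := by
  have hle : ∀ᶠ t : K in Filter.cofinite, ∀ n ∈ Set.Iic d,
      PowerSeries.coeff n (hilbertSeries ⊤ (pencilIdeal f g t)) ≤
        PowerSeries.coeff n (hilbertSeries ⊤ (pencilIdeal f g t₀)) :=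
    (Filter.eventually_all_finite (Set.finite_Iic d)).2 fun n _ =>
      isHomogeneousProj_id.eventually_coeff_hilbertSeries_pencilIdeal_le hf hg
        (fun _ _ hp => hp) t₀ n
  filter_upwards [hle] with t ht
  have hlex := lexNonneg_hilbertSeries_span_range (isHomogeneous_pencil hf hg t) he
  rw [← h] at hlex
  simpa [sub_eq_zero, pencilIdeal] using
    hlex.coeff_eq_zero fun n hn => by simpa [pencilIdeal] using ht n hn

/-- Both the part in `U` and the complementary part are upper semicontinuous along the pencil, and
their sum is generically constant. -/
theorem IsCompleteIntersection.eventually_coeff_hilbertSeries_eq (hπ : IsHomogeneousProj U π)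
    (hf : ∀ i, (f i).IsHomogeneous (e i)) (hg : ∀ i, (g i).IsHomogeneous (e i))
    (he : ∀ i, 0 < e i) {t₀ : K} (h : IsCompleteIntersection ((1 - t₀) • f + t₀ • g) e)
    (hstab : ∀ t, ∀ p ∈ pencilIdeal f g t, π p ∈ pencilIdeal f g t) (d : ℕ) :
    ∀ᶠ t : K in Filter.cofinite, PowerSeries.coeff d (hilbertSeries U (pencilIdeal f g t)) =
      PowerSeries.coeff d (hilbertSeries U (pencilIdeal f g t₀)) := by
  filter_upwards [h.eventually_coeff_hilbertSeries_pencilIdeal_eq hf hg he d,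
    hπ.eventually_coeff_hilbertSeries_pencilIdeal_le hf hg hstab t₀ d,
    hπ.ker.eventually_coeff_hilbertSeries_pencilIdeal_le hf hg
      (fun t p hp => sub_mem hp (hstab t p hp)) t₀ d] with t htop hU hker
  have hsum (t : K) := congrArg (PowerSeries.coeff d) (hπ.hilbertSeries_add_ker (hstab t))
  simp only [map_add] at hsum
  linarith [hsum t, hsum t₀]

theorem IsCompleteIntersection.hilbertSeries_eq [Infinite K] (hπ : IsHomogeneousProj U π)
    (hf : ∀ i, (f i).IsHomogeneous (e i)) (hg : ∀ i, (g i).IsHomogeneous (e i))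
    (he : ∀ i, 0 < e i) (hfCI : IsCompleteIntersection f e) (hgCI : IsCompleteIntersection g e)
    (hstab : ∀ t, ∀ p ∈ pencilIdeal f g t, π p ∈ pencilIdeal f g t) :
    hilbertSeries U (Ideal.span (Set.range f)) = hilbertSeries U (Ideal.span (Set.range g)) := by
  have hf₀ : (1 - (0 : K)) • f + (0 : K) • g = f := by simp
  have hg₁ : (1 - (1 : K)) • f + (1 : K) • g = g := by simp
  have hpencil₀ : pencilIdeal f g 0 = Ideal.span (Set.range f) := by rw [pencilIdeal, hf₀]
  have hpencil₁ : pencilIdeal f g 1 = Ideal.span (Set.range g) := by rw [pencilIdeal, hg₁]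
  ext d
  obtain ⟨t, ht₀, ht₁⟩ :=
    ((eventually_coeff_hilbertSeries_eq hπ hf hg he (t₀ := 0) (hf₀.symm ▸ hfCI) hstab d).and
      (eventually_coeff_hilbertSeries_eq hπ hf hg he (t₀ := 1) (hg₁.symm ▸ hgCI) hstab d)).exists
  rw [← hpencil₀, ← hpencil₁]
  exact ht₀.symm.trans ht₁

end Deformation

section Isotypic

variable {σ ι K : Type*} [Field K]

/-- An ideal is `PermStable` if it is preserved by all permutations of the variables. -/
def PermStable (J : Ideal (MvPolynomial σ K)) : Prop :=
  ∀ (w : Equiv.Perm σ), ∀ p ∈ J, rename w p ∈ J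

theorem permStable_span_range {f : ι → MvPolynomial σ K}
    (h : ∀ (w : Equiv.Perm σ) (i : ι), ∃ j, rename w (f i) = f j) :
    PermStable (Ideal.span (Set.range f)) := by
  intro w
  change Ideal.span (Set.range f) ≤ (Ideal.span (Set.range f)).comap (rename w)
  rw [Ideal.span_le]
  rintro _ ⟨i, rfl⟩
  obtain ⟨j, hj⟩ := h w i
  exact Ideal.subset_span ⟨j, hj.symm⟩

theorem permStable_singularIdeal [Fintype σ] [CharZero K] (b : ℕ) :
    PermStable (singularIdeal K σ b) :=
  permStable_span_range fun w i => ⟨w i, rename_singularVector b w i⟩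

theorem permStable_pencilIdeal_theta [Fintype σ] [CharZero K] (b : ℕ) (t : K) :
    PermStable (pencilIdeal (theta K b) (fun i : σ => (X i : MvPolynomial σ K) ^ b) t) :=
  permStable_span_range fun w i => ⟨w i, by simp [rename_theta]⟩

variable {α β : Type*}

/-- The action of the Young subgroup `Perm α × Perm β` on polynomials by permutation of the
variables within the two blocks. -/
noncomputable def blockRename (w : Equiv.Perm α × Equiv.Perm β) :
    MvPolynomial (α ⊕ β) K →ₐ[K] MvPolynomial (α ⊕ β) K :=
  rename (Equiv.Perm.sumCongrHom α β w)

theorem blockRename_mul (v w : Equiv.Perm α × Equiv.Perm β) (p : MvPolynomial (α ⊕ β) K) :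
    blockRename (v * w) p = blockRename v (blockRename w p) := by
  rw [blockRename, blockRename, blockRename, rename_rename, map_mul, Equiv.Perm.coe_mul]

variable [Fintype α] [DecidableEq α]

variable (K) in
/-- The character of `Perm α × Perm β` that is the sign on the first factor and trivial on the
second. -/
noncomputable def blockSign (w : Equiv.Perm α × Equiv.Perm β) : K :=
  ((Equiv.Perm.sign w.1 : ℤ) : K)

theorem blockSign_mul (v w : Equiv.Perm α × Equiv.Perm β) :
    blockSign K (v * w) = blockSign K v * blockSign K w := by
  simp [blockSign]

theorem blockSign_mul_self (w : Equiv.Perm α × Equiv.Perm β) :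
    blockSign K w * blockSign K w = 1 := by
  rcases Int.units_eq_one_or (Equiv.Perm.sign w.1) with h | h <;> simp [blockSign, h]

variable (K α β) in
/-- The polynomials that are antisymmetric in the first block of variables and symmetric in the
second. -/
noncomputable def isotypic : Submodule K (MvPolynomial (α ⊕ β) K) where
  carrier := {p | ∀ w : Equiv.Perm α × Equiv.Perm β, blockRename w p = blockSign K w • p}
  add_mem' hp hq w := by rw [map_add, hp w, hq w, smul_add]
  zero_mem' w := by rw [map_zero, smul_zero]
  smul_mem' c p hp w := by rw [map_smul, hp w, smul_comm]

theorem mem_isotypic {p : MvPolynomial (α ⊕ β) K} :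
    p ∈ isotypic K α β ↔
      ∀ w : Equiv.Perm α × Equiv.Perm β, blockRename w p = blockSign K w • p :=
  Iff.rfl

variable [Fintype β] [DecidableEq β]

variable (K α β) in
/-- The projection onto the isotypic part, obtained by averaging against the character. -/
noncomputable def isoProj : MvPolynomial (α ⊕ β) K →ₗ[K] MvPolynomial (α ⊕ β) K :=
  (Fintype.card (Equiv.Perm α × Equiv.Perm β) : K)⁻¹ •
    ∑ w : Equiv.Perm α × Equiv.Perm β, blockSign K w • (blockRename w).toLinearMap

theorem isoProj_apply (p : MvPolynomial (α ⊕ β) K) :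
    isoProj K α β p = (Fintype.card (Equiv.Perm α × Equiv.Perm β) : K)⁻¹ •
      ∑ w : Equiv.Perm α × Equiv.Perm β, blockSign K w • blockRename w p := by
  simp only [isoProj, LinearMap.smul_apply, LinearMap.sum_apply, AlgHom.toLinearMap_apply]

theorem isoProj_mem (p : MvPolynomial (α ⊕ β) K) : isoProj K α β p ∈ isotypic K α β := by
  intro v
  have h : blockRename v (∑ w : Equiv.Perm α × Equiv.Perm β, blockSign K w • blockRename w p) =
      blockSign K v • ∑ w : Equiv.Perm α × Equiv.Perm β, blockSign K w • blockRename w p := by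
    rw [map_sum, Finset.smul_sum]
    refine Fintype.sum_equiv (Equiv.mulLeft v) _ _ fun w => ?_
    rw [map_smul, Equiv.coe_mulLeft, blockRename_mul, blockSign_mul, smul_smul, ← mul_assoc,
      blockSign_mul_self, one_mul]
  rw [isoProj_apply, map_smul, h, smul_comm]

theorem isoProj_eq_self [CharZero K] {p : MvPolynomial (α ⊕ β) K} (hp : p ∈ isotypic K α β) :
    isoProj K α β p = p := by
  rw [isoProj_apply]
  simp only [mem_isotypic.1 hp, smul_smul, blockSign_mul_self, one_smul, Finset.sum_const,
    Finset.card_univ]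
  rw [← Nat.cast_smul_eq_nsmul K, smul_smul, inv_mul_cancel₀, one_smul]
  exact Nat.cast_ne_zero.2 Fintype.card_ne_zero

theorem isHomogeneousProj_isoProj [CharZero K] :
    IsHomogeneousProj (isotypic K α β) (isoProj K α β) where
  map_mem := isoProj_mem
  map_id _ := isoProj_eq_self
  isHomogeneous_apply hp := by
    rw [isoProj_apply]
    exact Submodule.smul_mem (homogeneousSubmodule _ _ _) _ (Submodule.sum_mem _ fun w _ =>
      Submodule.smul_mem _ _ hp.rename_isHomogeneous)

theorem isoProj_mul {f : MvPolynomial (α ⊕ β) K} (hf : ∀ w : Equiv.Perm (α ⊕ β), rename w f = f)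
    (u : MvPolynomial (α ⊕ β) K) : isoProj K α β (u * f) = isoProj K α β u * f := by
  simp only [isoProj_apply, smul_mul_assoc, Finset.sum_mul, map_mul, blockRename, hf]

theorem PermStable.isoProj_mem {J : Ideal (MvPolynomial (α ⊕ β) K)} (hJ : PermStable J)
    {p : MvPolynomial (α ⊕ β) K} (hp : p ∈ J) : isoProj K α β p ∈ J := by
  rw [isoProj_apply]
  exact Submodule.smul_of_tower_mem _ _ (Submodule.sum_mem _ fun w _ =>
    Submodule.smul_of_tower_mem _ _ (hJ _ p hp))

variable [CharZero K]

variable (K) in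
/-- The ideal generated by the singular vectors and the sum of the variables. The quotient by it is
the finite dimensional representation whose isotypic part is studied. -/
noncomputable def singularSumIdeal (σ : Type*) [Fintype σ] (b : ℕ) : Ideal (MvPolynomial σ K) :=
  singularIdeal K σ b ⊔ Ideal.span {varSum K σ}

variable [Nonempty (α ⊕ β)]

omit [DecidableEq β] in
theorem hilbertSeries_isotypic_singularSumIdeal [IsAlgClosed K] {b : ℕ} (hb : 0 < b)
    (hab : (Fintype.card (α ⊕ β)).Coprime b) :
    (1 - PowerSeries.X ^ b) *
        hilbertSeries (isotypic K α β) (singularSumIdeal K (α ⊕ β) b) =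
      (1 - PowerSeries.X) * hilbertSeries (isotypic K α β)
        (Ideal.span (Set.range fun i : α ⊕ β => (X i : MvPolynomial (α ⊕ β) K) ^ b)) := by
  classical
  have hcolon := (hilbertSeries_singularIdeal_and_colon_varSum (K := K) (σ := α ⊕ β) hb hab).2
  have hproj := isHomogeneousProj_isoProj (K := K) (α := α) (β := β)
  have hstab (p) (hp : p ∈ singularIdeal K (α ⊕ β) b) :=
    (permStable_singularIdeal b).isoProj_mem hp
  have hhom := isHomogeneous_ideal_singularIdeal (K := K) (σ := α ⊕ β) (b := b)
  have hsum : (varSum K (α ⊕ β)).IsHomogeneous 1 := isHomogeneous_varSum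
  have hpow : (varSum K (α ⊕ β) ^ b).IsHomogeneous b := by simpa using hsum.pow b
  rw [← (isCompleteIntersection_theta hb hab).hilbertSeries_eq hproj (isHomogeneous_theta b)
      (fun i => isHomogeneous_X_pow i b) (fun _ => hb) (isCompleteIntersection_X_pow hb)
      (fun t p hp => (permStable_pencilIdeal_theta b t).isoProj_mem hp),
    span_range_theta hb, singularSumIdeal,
    hilbertSeries_sup_span_of_colon_eq hproj (isoProj_mul rename_varSum) hstab hhom hsum hcolon,
    hilbertSeries_sup_span_of_colon_eq hproj (isoProj_mul fun w => by rw [map_pow, rename_varSum])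
      hstab hhom hpow (colon_singleton_pow_eq hcolon b)]
  ring

end Isotypic

section ExponentTypes

theorem exists_perm_of_map_univ_eq {α γ : Type*} [Fintype α] {f g : α → γ}
    (h : Finset.univ.val.map f = Finset.univ.val.map g) :
    ∃ e : Equiv.Perm α, ∀ i, g (e i) = f i := by
  classical
  have hfiber (c : γ) : Nonempty ({a // f a = c} ≃ {a // g a = c}) := by
    have hcount := congrArg (Multiset.count c) h
    rw [Multiset.count_map, Multiset.count_map] at hcount
    rw [← Fintype.card_eq, Fintype.card_subtype, Fintype.card_subtype]
    simp_rw [eq_comm (a := c)] at hcount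
    exact hcount
  exact ⟨Equiv.ofFiberEquiv fun c => (hfiber c).some, fun i => Equiv.ofFiberEquiv_map _ i⟩

theorem exists_map_univ_eq {α γ : Type*} [Fintype α] {A : Multiset γ}
    (h : Multiset.card A = Fintype.card α) : ∃ f : α → γ, Finset.univ.val.map f = A := by
  obtain ⟨l, rfl⟩ : ∃ l : List γ, (l : Multiset γ) = A := Quot.exists_rep A
  let e : α ≃ Fin l.length := Fintype.equivFinOfCardEq h.symm
  have hl : Finset.univ.val.map (l.get ∘ e) = l := by
    rw [← Multiset.map_map, Multiset.map_univ_val_equiv, Fin.univ_val_map, List.ofFn_get]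
  exact ⟨l.get ∘ e, hl⟩

theorem map_univ_comp_equiv {α γ : Type*} [Fintype α] (f : α → γ) (e : Equiv.Perm α) :
    Finset.univ.val.map (f ∘ e) = Finset.univ.val.map f := by
  rw [← Multiset.map_map, Multiset.map_univ_val_equiv]

variable {α β K : Type*} [Field K]

theorem blockSign_mul_coeff_mapDomain [Fintype α] [DecidableEq α] {p : MvPolynomial (α ⊕ β) K}
    (hp : p ∈ isotypic K α β) (w : Equiv.Perm α × Equiv.Perm β) (m : α ⊕ β →₀ ℕ) :
    blockSign K w * coeff (m.mapDomain (Equiv.Perm.sumCongrHom α β w)) p = coeff m p := by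
  rw [← smul_eq_mul, ← coeff_smul, ← mem_isotypic.1 hp w]
  exact coeff_rename_mapDomain _ (Equiv.injective _) _ _

variable [Fintype α] [Fintype β]

/-- The pair of multisets of exponents of a monomial in two blocks of variables: its orbit under
permutations within the blocks. -/
def exponentType (m : α ⊕ β →₀ ℕ) : Multiset ℕ × Multiset ℕ :=
  (Finset.univ.val.map fun i => m (Sum.inl i), Finset.univ.val.map fun j => m (Sum.inr j))

theorem exists_exponentType_eq {t : Multiset ℕ × Multiset ℕ}
    (hfst : Multiset.card t.1 = Fintype.card α) (hsnd : Multiset.card t.2 = Fintype.card β) :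
    ∃ m : α ⊕ β →₀ ℕ, exponentType m = t := by
  obtain ⟨f, hf⟩ := exists_map_univ_eq hfst
  obtain ⟨g, hg⟩ := exists_map_univ_eq hsnd
  exact ⟨Finsupp.equivFunOnFinite.symm (Sum.elim f g), Prod.ext hf hg⟩

theorem exists_mapDomain_eq_of_exponentType_eq {m m' : α ⊕ β →₀ ℕ}
    (h : exponentType m = exponentType m') :
    ∃ w : Equiv.Perm α × Equiv.Perm β, m.mapDomain (Equiv.Perm.sumCongrHom α β w) = m' := by
  obtain ⟨e₁, h₁⟩ := exists_perm_of_map_univ_eq (congrArg Prod.fst h)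
  obtain ⟨e₂, h₂⟩ := exists_perm_of_map_univ_eq (congrArg Prod.snd h)
  refine ⟨(e₁, e₂), Finsupp.ext fun x => ?_⟩
  rw [Finsupp.mapDomain_equiv_apply]
  rcases x with i | j
  · simpa using (h₁ (e₁.symm i)).symm
  · simpa using (h₂ (e₂.symm j)).symm

theorem exponentType_mapDomain (m : α ⊕ β →₀ ℕ) (w : Equiv.Perm α × Equiv.Perm β) :
    exponentType (m.mapDomain (Equiv.Perm.sumCongrHom α β w)) = exponentType m := by
  simp only [exponentType, Finsupp.mapDomain_equiv_apply]
  exact Prod.ext (map_univ_comp_equiv (fun i => m (Sum.inl i)) w.1.symm)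
    (map_univ_comp_equiv (fun j => m (Sum.inr j)) w.2.symm)

variable [DecidableEq α]

theorem coeff_eq_zero_of_exponentType_eq {p : MvPolynomial (α ⊕ β) K} (hp : p ∈ isotypic K α β)
    {m m' : α ⊕ β →₀ ℕ} (h : exponentType m = exponentType m') (hm : coeff m p = 0) :
    coeff m' p = 0 := by
  obtain ⟨w, rfl⟩ := exists_mapDomain_eq_of_exponentType_eq h
  have hw := blockSign_mul_coeff_mapDomain hp w m
  rw [hm] at hw
  exact (mul_eq_zero.1 hw).resolve_left
    (left_ne_zero_of_mul_eq_one (blockSign_mul_self w))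

theorem exponentType_fst_nodup_of_coeff_ne_zero [CharZero K] {p : MvPolynomial (α ⊕ β) K}
    (hp : p ∈ isotypic K α β) {m : α ⊕ β →₀ ℕ} (hm : coeff m p ≠ 0) :
    (exponentType m).1.Nodup := by
  refine Fintype.nodup_map_univ_iff_injective.2 fun i j hij => ?_
  by_contra hne
  have hfix : m.mapDomain (Equiv.Perm.sumCongrHom α β (Equiv.swap i j, 1)) = m := by
    refine Finsupp.ext fun x => ?_
    rw [Finsupp.mapDomain_equiv_apply]
    rcases x with x | x
    · change m (Sum.inl ((Equiv.swap i j).symm x)) = _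
      rw [Equiv.symm_swap]
      exact Equiv.apply_swap_eq_self (v := fun x => m (Sum.inl x)) hij x
    · rfl
  have hswap := blockSign_mul_coeff_mapDomain hp (Equiv.swap i j, 1) m
  rw [hfix, blockSign, Equiv.Perm.sign_swap hne] at hswap
  push_cast at hswap
  exact hm (self_eq_neg.1 (by linear_combination -hswap))

theorem blockSign_eq_one_of_mapDomain_eq {m : α ⊕ β →₀ ℕ} (h : (exponentType m).1.Nodup)
    {w : Equiv.Perm α × Equiv.Perm β} (hw : m.mapDomain (Equiv.Perm.sumCongrHom α β w) = m) :
    blockSign K w = 1 := by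
  have hinj := Fintype.nodup_map_univ_iff_injective.1 h
  have hone : w.1 = 1 := by
    ext1 i
    have hi := DFunLike.congr_fun hw (Sum.inl (w.1 i))
    rw [Finsupp.mapDomain_equiv_apply] at hi
    exact hinj (hi.symm.trans (congrArg (fun i => m (Sum.inl i)) (w.1.symm_apply_apply i)))
  simp [blockSign, hone]

variable [DecidableEq β]

theorem coeff_isoProj_monomial_of_ne {m m' : α ⊕ β →₀ ℕ} (h : exponentType m' ≠ exponentType m) :
    coeff m' (isoProj K α β (monomial m 1)) = 0 := by
  rw [isoProj_apply, coeff_smul, coeff_sum, Finset.sum_eq_zero, smul_zero]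
  intro w _
  rw [coeff_smul, blockRename, rename_monomial, coeff_monomial, if_neg, smul_zero]
  rintro rfl
  exact h (exponentType_mapDomain m w)

variable (K) in
/-- The isotypic projection of a monomial, normalized to have coefficient `1` at that monomial. It
is `0` if the exponents in the first block are not distinct. -/
noncomputable def isoMonomial (m : α ⊕ β →₀ ℕ) : MvPolynomial (α ⊕ β) K :=
  (coeff m (isoProj K α β (monomial m 1)))⁻¹ • isoProj K α β (monomial m 1)

theorem isoMonomial_mem (m : α ⊕ β →₀ ℕ) : isoMonomial K m ∈ isotypic K α β :=
  Submodule.smul_mem _ _ (isoProj_mem _)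

theorem coeff_isoMonomial_of_ne {m m' : α ⊕ β →₀ ℕ} (h : exponentType m' ≠ exponentType m) :
    coeff m' (isoMonomial K m) = 0 := by
  rw [isoMonomial, coeff_smul, coeff_isoProj_monomial_of_ne h, smul_zero]

variable [CharZero K]

theorem coeff_isoProj_monomial_ne_zero {m : α ⊕ β →₀ ℕ} (h : (exponentType m).1.Nodup) :
    coeff m (isoProj K α β (monomial m 1)) ≠ 0 := by
  classical
  have hterm (w : Equiv.Perm α × Equiv.Perm β) :
      coeff m (blockSign K w • blockRename w (monomial m (1 : K))) =
        if m.mapDomain (Equiv.Perm.sumCongrHom α β w) = m then 1 else 0 := by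
    rw [coeff_smul, blockRename, rename_monomial, coeff_monomial]
    split_ifs with hw
    · rw [blockSign_eq_one_of_mapDomain_eq h hw, one_smul]
    · rw [smul_zero]
  rw [isoProj_apply, coeff_smul, coeff_sum, smul_eq_mul, Finset.sum_congr rfl fun w _ => hterm w,
    Finset.sum_boole]
  refine mul_ne_zero (inv_ne_zero (Nat.cast_ne_zero.2 Fintype.card_ne_zero))
    (Nat.cast_ne_zero.2 (Finset.card_ne_zero.2 ⟨1, ?_⟩))
  rw [Finset.mem_filter, map_one]
  exact ⟨Finset.mem_univ _, Finsupp.mapDomain_id⟩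

theorem coeff_isoMonomial_self {m : α ⊕ β →₀ ℕ} (h : (exponentType m).1.Nodup) :
    coeff m (isoMonomial K m) = 1 := by
  rw [isoMonomial, coeff_smul, smul_eq_mul, inv_mul_cancel₀ (coeff_isoProj_monomial_ne_zero h)]

omit [DecidableEq β] in
theorem finrank_eq_card_of_mem_iff_exponentType_mem {T : Finset (Multiset ℕ × Multiset ℕ)}
    (hT : ∀ t ∈ T, Multiset.card t.1 = Fintype.card α ∧ Multiset.card t.2 = Fintype.card β ∧
      t.1.Nodup) {U : Submodule K (MvPolynomial (α ⊕ β) K)}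
    (hU : ∀ p, p ∈ U ↔ p ∈ isotypic K α β ∧ ∀ m, coeff m p ≠ 0 → exponentType m ∈ T) :
    Module.finrank K U = T.card := by
  classical
  have hex (t : T) : ∃ m : α ⊕ β →₀ ℕ, exponentType m = t :=
    exists_exponentType_eq (hT t t.2).1 (hT t t.2).2.1
  choose r hr using hex
  let φ : U →ₗ[K] (T → K) := LinearMap.pi fun t => (lcoeff K (r t)).comp U.subtype
  have hφ (p t) : φ p t = coeff (r t) p.1 := rfl
  have hinj : Function.Injective φ := by
    rw [← LinearMap.ker_eq_bot, LinearMap.ker_eq_bot']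
    intro p hp
    obtain ⟨hpiso, hpT⟩ := (hU p).1 p.2
    refine Subtype.ext (MvPolynomial.ext _ _ fun m => ?_)
    by_contra hm
    refine hm (coeff_eq_zero_of_exponentType_eq hpiso (hr ⟨_, hpT m hm⟩) ?_)
    rw [← hφ, hp]
    rfl
  have hcoeff (s t : T) : coeff (r s) (isoMonomial K (r t)) = (Pi.single t 1 : T → K) s := by
    rcases eq_or_ne s t with rfl | hst
    · rw [coeff_isoMonomial_self (by rw [hr]; exact (hT s s.2).2.2), Pi.single_eq_same]
    · rw [Pi.single_eq_of_ne hst, coeff_isoMonomial_of_ne]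
      rwa [hr, hr, Ne, Subtype.coe_inj]
  have hsurj : Function.Surjective φ := by
    rw [← LinearMap.range_eq_top, eq_top_iff, ← (Pi.basisFun K T).span_eq, Submodule.span_le]
    rintro _ ⟨t, rfl⟩
    have hmem : isoMonomial K (r t) ∈ U := by
      refine (hU _).2 ⟨isoMonomial_mem _, fun m hm => ?_⟩
      rw [not_imp_comm.1 coeff_isoMonomial_of_ne hm, hr]
      exact t.2
    exact ⟨⟨_, hmem⟩, funext fun s => by rw [hφ, hcoeff, Pi.basisFun_apply]⟩
  rw [(LinearEquiv.ofBijective φ ⟨hinj, hsurj⟩).finrank_eq, Module.finrank_fintype_fun_eq_card,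
    Fintype.card_coe]

end ExponentTypes

section Counting

/-- The generating function of the `n`-element subsets of `{0, …, b - 1}` by sum. -/
noncomputable def subsetGen (n b : ℕ) : Polynomial ℤ :=
  ∑ S ∈ Finset.powersetCard n (Finset.range b), Polynomial.X ^ S.val.sum

/-- The generating function of the `n`-element multisets in `{0, …, b - 1}` by sum. -/
noncomputable def multisetGen (n b : ℕ) : Polynomial ℤ :=
  ∑ M ∈ (Finset.range b).sym n, Polynomial.X ^ (M : Multiset ℕ).sum

/-- The exponent types of total degree `d` with exponents less than `b`, the first multiset being
a set of size `k` and the second having size `l`. -/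
def exponentTypes (k l b d : ℕ) : Finset (Multiset ℕ × Multiset ℕ) :=
  ((Finset.powersetCard k (Finset.range b) ×ˢ (Finset.range b).sym l).filter fun t =>
    t.1.val.sum + (t.2 : Multiset ℕ).sum = d).image fun t => (t.1.val, (t.2 : Multiset ℕ))

theorem card_exponentTypes (k l b d : ℕ) :
    ((exponentTypes k l b d).card : ℤ) = (subsetGen k b * multisetGen l b).coeff d := by
  rw [exponentTypes, Finset.card_image_of_injective, subsetGen, multisetGen,
    Finset.sum_mul_sum, ← Finset.sum_product', Polynomial.finsetSum_coeff]
  · simp only [← pow_add, Polynomial.coeff_X_pow, eq_comm (a := d)]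
    rw [Finset.sum_boole]
  · intro t t' h
    exact Prod.ext (Finset.val_injective (congrArg Prod.fst h))
      (Sym.coe_injective (congrArg Prod.snd h))

theorem mem_exponentTypes {k l b d : ℕ} {t : Multiset ℕ × Multiset ℕ} :
    t ∈ exponentTypes k l b d ↔ (Multiset.card t.1 = k ∧ Multiset.card t.2 = l ∧ t.1.Nodup) ∧
      (∀ x ∈ t.1 + t.2, x < b) ∧ t.1.sum + t.2.sum = d := by
  rw [exponentTypes, Finset.mem_image]
  constructor
  · rintro ⟨⟨S, M⟩, h, rfl⟩
    rw [Finset.mem_filter, Finset.mem_product, Finset.mem_powersetCard, Finset.mem_sym_iff] at h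
    obtain ⟨⟨⟨hS, hk⟩, hM⟩, hd⟩ := h
    refine ⟨⟨hk, M.2, S.nodup⟩, fun x hx => ?_, hd⟩
    rcases Multiset.mem_add.1 hx with hx | hx
    · exact Finset.mem_range.1 (hS hx)
    · exact Finset.mem_range.1 (hM x hx)
  · rintro ⟨⟨hk, hl, hn⟩, hb, hd⟩
    refine ⟨(⟨t.1, hn⟩, ⟨t.2, hl⟩), ?_, rfl⟩
    rw [Finset.mem_filter, Finset.mem_product, Finset.mem_powersetCard, Finset.mem_sym_iff]
    exact ⟨⟨⟨fun x hx => Finset.mem_range.2 (hb x (Multiset.mem_add.2 (Or.inl hx))), hk⟩,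
      fun x hx => Finset.mem_range.2 (hb x (Multiset.mem_add.2 (Or.inr hx)))⟩, hd⟩

theorem exponentTypes_subset {k l b b' d : ℕ} (h : b ≤ b') :
    exponentTypes k l b d ⊆ exponentTypes k l b' d := fun t ht => by
  rw [mem_exponentTypes] at ht ⊢
  exact ⟨ht.1, fun x hx => (ht.2.1 x hx).trans_le h, ht.2.2⟩

variable {α β K : Type*} [Field K] [Fintype α] [Fintype β]

theorem exponentType_mem_exponentTypes {m : α ⊕ β →₀ ℕ} {b d : ℕ} :
    exponentType m ∈ exponentTypes (Fintype.card α) (Fintype.card β) b d ↔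
      (exponentType m).1.Nodup ∧ (∀ i, m i < b) ∧ m.degree = d := by
  have hdegree : (exponentType m).1.sum + (exponentType m).2.sum = m.degree := by
    rw [Finsupp.degree_eq_sum, Fintype.sum_sum_type]
    rfl
  rw [mem_exponentTypes, hdegree]
  simp [exponentType, or_imp, forall_and]

theorem mem_span_range_X_pow_iff {σ : Type*} {b : ℕ} {p : MvPolynomial σ K} :
    p ∈ Ideal.span (Set.range fun i : σ => (X i : MvPolynomial σ K) ^ b) ↔
      ∀ m, coeff m p ≠ 0 → ∃ i, b ≤ m i := by
  have himage : (Set.range fun i : σ => (X i : MvPolynomial σ K) ^ b) =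
      (fun s => monomial s (1 : K)) '' Set.range fun i => Finsupp.single i b := by
    simp only [← Set.range_comp, Function.comp_def, X_pow_eq_monomial]
  rw [himage, mem_ideal_span_monomial_image]
  simp [mem_support_iff]

theorem degree_eq_of_coeff_ne_zero {σ : Type*} {p : MvPolynomial σ K} {d : ℕ}
    (hp : p.IsHomogeneous d) {m : σ →₀ ℕ} (hm : coeff m p ≠ 0) : m.degree = d :=
  not_imp_comm.1 hp.coeff_eq_zero hm

variable [DecidableEq α] [CharZero K]

theorem mem_gradedPiece_isotypic_top_iff {d n : ℕ} (hn : d < n) {p : MvPolynomial (α ⊕ β) K} :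
    p ∈ gradedPiece (isotypic K α β) ⊤ d ↔ p ∈ isotypic K α β ∧ ∀ m, coeff m p ≠ 0 →
      exponentType m ∈ exponentTypes (Fintype.card α) (Fintype.card β) n d := by
  simp only [exponentType_mem_exponentTypes, mem_gradedPiece]
  constructor
  · rintro ⟨⟨hp, -⟩, hd⟩
    refine ⟨hp, fun m hm => ⟨exponentType_fst_nodup_of_coeff_ne_zero hp hm, fun i => ?_,
      degree_eq_of_coeff_ne_zero hd hm⟩⟩
    exact (degree_eq_of_coeff_ne_zero hd hm ▸ Finsupp.le_degree i m).trans_lt hn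
  · rintro ⟨hp, hsupp⟩
    exact ⟨⟨hp, trivial⟩,
      fun m hm => Finsupp.degree_eq_weight_one (R := ℕ) ▸ (hsupp m hm).2.2⟩

theorem mem_gradedPiece_isotypic_span_range_X_pow_iff {b d n : ℕ} (hn : d < n)
    {p : MvPolynomial (α ⊕ β) K} :
    p ∈ gradedPiece (isotypic K α β)
        (Ideal.span (Set.range fun i : α ⊕ β => (X i : MvPolynomial (α ⊕ β) K) ^ b)) d ↔
      p ∈ isotypic K α β ∧ ∀ m, coeff m p ≠ 0 →
        exponentType m ∈ exponentTypes (Fintype.card α) (Fintype.card β) n d \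
          exponentTypes (Fintype.card α) (Fintype.card β) b d := by
  have htop := mem_gradedPiece_isotypic_top_iff hn (p := p)
  rw [mem_gradedPiece, mem_span_range_X_pow_iff]
  simp only [Finset.mem_sdiff]
  constructor
  · rintro ⟨⟨hp, hI⟩, hd⟩
    refine ⟨hp, fun m hm => ⟨(htop.1 ⟨⟨hp, trivial⟩, hd⟩).2 m hm, fun hmem => ?_⟩⟩
    obtain ⟨i, hi⟩ := hI m hm
    exact hi.not_gt ((exponentType_mem_exponentTypes.1 hmem).2.1 i)
  · rintro ⟨hp, hsupp⟩
    have hd := (htop.2 ⟨hp, fun m hm => (hsupp m hm).1⟩).2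
    refine ⟨⟨hp, fun m hm => ?_⟩, hd⟩
    by_contra! hlt
    exact (hsupp m hm).2 (exponentType_mem_exponentTypes.2
      ⟨exponentType_fst_nodup_of_coeff_ne_zero hp hm, hlt, degree_eq_of_coeff_ne_zero hd hm⟩)

theorem hilbertSeries_isotypic_span_range_X_pow (b : ℕ) :
    hilbertSeries (isotypic K α β)
        (Ideal.span (Set.range fun i : α ⊕ β => (X i : MvPolynomial (α ⊕ β) K) ^ b)) =
      (subsetGen (Fintype.card α) b * multisetGen (Fintype.card β) b : Polynomial ℤ) := by
  ext d
  have hd : d < b + d + 1 := by omega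
  rw [Polynomial.coeff_coe, ← card_exponentTypes, coeff_hilbertSeries,
    finrank_eq_card_of_mem_iff_exponentType_mem (fun t ht => (mem_exponentTypes.1 ht).1)
      fun p => mem_gradedPiece_isotypic_top_iff hd,
    finrank_eq_card_of_mem_iff_exponentType_mem
      (fun t ht => (mem_exponentTypes.1 (Finset.sdiff_subset ht)).1)
      fun p => mem_gradedPiece_isotypic_span_range_X_pow_iff hd,
    Finset.cast_card_sdiff (exponentTypes_subset (by omega)), sub_sub_cancel]

end Counting

section QCounting

theorem subsetGen_zero_left (b : ℕ) : subsetGen 0 b = 1 := by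
  simp [subsetGen]

theorem multisetGen_zero_left (b : ℕ) : multisetGen 0 b = 1 := by
  rw [multisetGen, Finset.sym_zero, Finset.sum_singleton]
  exact pow_zero _

theorem multisetGen_succ_zero (l : ℕ) : multisetGen (l + 1) 0 = 0 := by
  rw [multisetGen, Finset.range_zero, Finset.sym_empty, Finset.sum_empty]

theorem subsetGen_self (k : ℕ) : subsetGen k k = Polynomial.X ^ k.choose 2 := by
  have h := Finset.powersetCard_self (Finset.range k)
  rw [Finset.card_range] at h
  rw [subsetGen, h, Finset.sum_singleton, Nat.choose_two_right, ← Finset.sum_range_id]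
  simp [Finset.sum]

theorem subsetGen_succ_succ (k b : ℕ) :
    subsetGen (k + 1) (b + 1) = subsetGen (k + 1) b + Polynomial.X ^ b * subsetGen k b := by
  have hb {n : ℕ} {S : Finset ℕ} (hS : S ∈ Finset.powersetCard n (Finset.range b)) : b ∉ S :=
    fun h => Finset.notMem_range_self ((Finset.mem_powersetCard.1 hS).1 h)
  rw [subsetGen, Finset.range_add_one, Finset.powersetCard_succ_insert Finset.notMem_range_self,
    Finset.sum_union, Finset.sum_image, subsetGen, subsetGen, Finset.mul_sum]
  · congr 1
    refine Finset.sum_congr rfl fun S hS => ?_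
    rw [Finset.insert_val_of_notMem (hb hS), Multiset.sum_cons, pow_add]
  · intro S hS S' hS' h
    rw [← Finset.erase_insert (hb hS), ← Finset.erase_insert (hb hS'), h]
  · rw [Finset.disjoint_left]
    intro S hS hS'
    obtain ⟨S', -, rfl⟩ := Finset.mem_image.1 hS'
    exact hb hS (Finset.mem_insert_self b S')

theorem sym_range_succ_succ (l b : ℕ) :
    (Finset.range (b + 1)).sym (l + 1) =
      (Finset.range b).sym (l + 1) ∪ ((Finset.range (b + 1)).sym l).image (Sym.cons b) := by
  ext M
  simp only [Finset.mem_union, Finset.mem_image, Finset.mem_sym_iff, Finset.mem_range]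
  constructor
  · intro hM
    by_cases hb : b ∈ M
    · obtain ⟨M, rfl⟩ := Sym.exists_cons_of_mem hb
      exact Or.inr ⟨M, fun x hx => hM x (Sym.mem_cons_of_mem hx), rfl⟩
    · exact Or.inl fun x hx =>
        (Nat.lt_succ_iff.1 (hM x hx)).lt_of_ne fun h => hb (h ▸ hx)
  · rintro (hM | ⟨M, hM, rfl⟩) x hx
    · exact Nat.lt_succ_of_lt (hM x hx)
    · rcases Sym.mem_cons.1 hx with rfl | hx
      · exact Nat.lt_succ_self x
      · exact hM x hx

theorem multisetGen_succ_succ (l b : ℕ) :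
    multisetGen (l + 1) (b + 1) =
      multisetGen (l + 1) b + Polynomial.X ^ b * multisetGen l (b + 1) := by
  rw [multisetGen, sym_range_succ_succ, Finset.sum_union, Finset.sum_image, multisetGen,
    multisetGen, Finset.mul_sum]
  · congr 1
    refine Finset.sum_congr rfl fun M _ => ?_
    rw [Sym.coe_cons, Multiset.sum_cons, pow_add]
  · intro M _ M' _ h
    exact (Sym.cons_inj_right b M M').1 h
  · rw [Finset.disjoint_left]
    intro M hM hM'
    obtain ⟨M', -, rfl⟩ := Finset.mem_image.1 hM'
    exact Finset.notMem_range_self (Finset.mem_sym_iff.1 hM b (Sym.mem_cons_self b M'))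

theorem qInt_add (m n : ℕ) : qInt (m + n) = qInt m + Polynomial.X ^ m * qInt n := by
  rw [qInt, Finset.sum_range_add, qInt, qInt, Finset.mul_sum]
  simp only [pow_add]

theorem one_sub_X_mul_qInt (n : ℕ) : (1 - Polynomial.X) * qInt n = 1 - Polynomial.X ^ n :=
  mul_neg_geom_sum _ n

theorem qFactorial_succ (n : ℕ) : qFactorial (n + 1) = qInt (n + 1) * qFactorial n := rfl

theorem qInt_ne_zero {n : ℕ} (hn : n ≠ 0) : qInt n ≠ 0 := by
  intro h
  have heval : (qInt n).eval 1 = n := by simp [qInt, Polynomial.eval_finsetSum]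
  rw [h, Polynomial.eval_zero] at heval
  exact hn (by exact_mod_cast heval.symm)

theorem qFactorial_ne_zero (n : ℕ) : qFactorial n ≠ 0 := by
  induction n with
  | zero => exact one_ne_zero
  | succ n ih => exact mul_ne_zero (qInt_ne_zero n.succ_ne_zero) ih

theorem subsetGen_mul_qFactorial (k m : ℕ) :
    subsetGen k (k + m) * (qFactorial k * qFactorial m) =
      Polynomial.X ^ k.choose 2 * qFactorial (k + m) := by
  induction k generalizing m with
  | zero => simp [subsetGen_zero_left, qFactorial]
  | succ k ihk =>
    induction m with
    | zero => simp [subsetGen_self, qFactorial]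
    | succ m ihm =>
      have hk := ihk (m + 1)
      have hchoose : (k + 1).choose 2 = k + k.choose 2 := by
        rw [Nat.choose_succ_succ, Nat.choose_one_right]
      have hqInt : qInt (k + 1 + m + 1) = qInt (m + 1) + Polynomial.X ^ (m + 1) * qInt (k + 1) := by
        rw [← qInt_add, add_comm (m + 1), add_assoc (k + 1)]
      rw [← add_assoc, add_right_comm] at hk
      rw [← add_assoc, subsetGen_succ_succ, qFactorial_succ (k + 1 + m), hqInt]
      rw [qFactorial_succ k, hchoose, pow_add] at ihm ⊢
      rw [qFactorial_succ m] at hk ⊢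
      linear_combination qInt (m + 1) * ihm + Polynomial.X ^ (k + 1 + m) * qInt (k + 1) * hk

theorem multisetGen_mul_qFactorial (l b : ℕ) :
    multisetGen l (b + 1) * (qFactorial l * qFactorial b) = qFactorial (b + l) := by
  induction l generalizing b with
  | zero => simp [multisetGen_zero_left, qFactorial]
  | succ l ihl =>
    induction b with
    | zero =>
      have hl := ihl 0
      rw [multisetGen_succ_succ, multisetGen_succ_zero]
      simp only [zero_add, pow_zero, one_mul, qFactorial_succ] at hl ⊢
      linear_combination qInt (l + 1) * hl
    | succ b ihb =>
      have hl := ihl (b + 1)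
      have hqInt : qInt (b + (l + 1) + 1) =
          qInt (b + 1) + Polynomial.X ^ (b + 1) * qInt (l + 1) := by
        rw [← qInt_add, add_right_comm]
      have hsum : b + 1 + l = b + (l + 1) := by ring
      rw [hsum] at hl
      rw [add_right_comm b 1 (l + 1), multisetGen_succ_succ, qFactorial_succ (b + (l + 1)), hqInt]
      rw [qFactorial_succ l] at ihb ⊢
      rw [qFactorial_succ b] at hl ⊢
      linear_combination qInt (b + 1) * ihb + Polynomial.X ^ (b + 1) * qInt (l + 1) * hl

theorem one_sub_X_mul_subsetGen_mul_multisetGen {k l b : ℕ} (hb : 0 < b) (hk : k ≤ b)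
    {C : Polynomial ℤ}
    (hC : qInt (b + l) * C * (qFactorial k * qFactorial l * qFactorial (b - k)) =
      qFactorial (b + l)) :
    (1 - Polynomial.X) * (subsetGen k b * multisetGen l b) =
      (1 - Polynomial.X ^ b) * (Polynomial.X ^ k.choose 2 * C) := by
  obtain ⟨b, rfl⟩ := Nat.exists_eq_succ_of_ne_zero hb.ne'
  rw [Nat.succ_eq_add_one] at *
  have hne : qInt (b + 1 + l) *
      (qFactorial k * qFactorial l * qFactorial (b + 1 - k) * qFactorial b) ≠ 0 := by
    simp only [ne_eq, mul_eq_zero, qFactorial_ne_zero, or_self, or_false]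
    exact qInt_ne_zero (by omega)
  have hsubset := subsetGen_mul_qFactorial k (b + 1 - k)
  have hmultiset := multisetGen_mul_qFactorial l b
  rw [Nat.add_sub_of_le hk, qFactorial_succ b] at hsubset
  rw [Nat.add_right_comm b 1 l, qFactorial_succ, Nat.add_right_comm b l 1] at hC
  apply mul_right_cancel₀ hne
  rw [← one_sub_X_mul_qInt]
  linear_combination (1 - Polynomial.X) * qInt (b + 1 + l) * multisetGen l (b + 1) *
    qFactorial l * qFactorial b * hsubset + (1 - Polynomial.X) * qInt (b + 1 + l) *
    Polynomial.X ^ k.choose 2 * qInt (b + 1) * qFactorial b * hmultiset -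
    (1 - Polynomial.X) * qInt (b + 1) * Polynomial.X ^ k.choose 2 * qFactorial b * hC

end QCounting

section DividedDifferences

variable {σ R : Type*} [CommRing R]

theorem exists_eq_C_of_isHomogeneous_zero {f : MvPolynomial σ R} (hf : f.IsHomogeneous 0) :
    ∃ r, f = C r :=
  ⟨_, totalDegree_eq_zero_iff_eq_C.1 (Nat.le_zero.1 hf.totalDegree_le)⟩

theorem X_sub_X_dvd_sub_rename_swap [DecidableEq σ] (i j : σ) (f : MvPolynomial σ R) :
    X i - X j ∣ f - rename (Equiv.swap i j) f := by
  induction f using MvPolynomial.induction_on with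
  | C r => simp
  | add f g hf hg =>
    rw [map_add, add_sub_add_comm]
    exact dvd_add hf hg
  | mul_X f m hf =>
    have hX : (X i - X j : MvPolynomial σ R) ∣ X m - X (Equiv.swap i j m) := by
      rcases eq_or_ne m i with rfl | hi
      · rw [Equiv.swap_apply_left]
      · rcases eq_or_ne m j with rfl | hj
        · rw [Equiv.swap_apply_right, ← neg_sub]
          exact (dvd_refl (X m - X i : MvPolynomial σ R)).neg_left
        · rw [Equiv.swap_apply_of_ne_of_ne hi hj, sub_self]
          exact dvd_zero _
    rw [map_mul, rename_X]
    obtain ⟨p, hp⟩ := hf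
    obtain ⟨q, hq⟩ := hX
    exact ⟨p * X m + rename (Equiv.swap i j) f * q, by
      linear_combination X m * hp + rename (Equiv.swap i j) f * hq⟩

variable [IsDomain R]

theorem X_sub_X_ne_zero {i j : σ} (h : i ≠ j) : (X i - X j : MvPolynomial σ R) ≠ 0 :=
  sub_ne_zero.2 (X_injective.ne h)

variable [DecidableEq σ]

/-- The divided difference `f ↦ (f - s f) / (X i - X j)`, where `s` exchanges the variables `i` and
`j`; it is zero for `i = j`. -/
noncomputable def divDiff (i j : σ) : Module.End R (MvPolynomial σ R) where
  toFun f := if i = j then 0 else (X_sub_X_dvd_sub_rename_swap i j f).choose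
  map_add' f g := by
    split_ifs with h
    · exact (add_zero 0).symm
    apply mul_left_cancel₀ (X_sub_X_ne_zero h)
    rw [mul_add]
    simp only [← (X_sub_X_dvd_sub_rename_swap i j _).choose_spec]
    rw [map_add, add_sub_add_comm]
  map_smul' c f := by
    split_ifs with h
    · exact (smul_zero _).symm
    apply mul_left_cancel₀ (X_sub_X_ne_zero h)
    rw [RingHom.id_apply, mul_smul_comm]
    simp only [← (X_sub_X_dvd_sub_rename_swap i j _).choose_spec]
    rw [map_smul, smul_sub]

theorem divDiff_self (i : σ) (f : MvPolynomial σ R) : divDiff i i f = 0 :=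
  if_pos rfl

theorem mul_divDiff (i j : σ) (f : MvPolynomial σ R) :
    (X i - X j) * divDiff i j f = f - rename (Equiv.swap i j) f := by
  rcases eq_or_ne i j with rfl | hij
  · simp [divDiff_self]
  · exact (congrArg _ (if_neg hij)).trans (X_sub_X_dvd_sub_rename_swap i j f).choose_spec.symm

theorem divDiff_eq_of_mul_eq {i j : σ} (hij : i ≠ j) {f g : MvPolynomial σ R}
    (hg : (X i - X j) * g = f - rename (Equiv.swap i j) f) : divDiff i j f = g :=
  mul_left_cancel₀ (X_sub_X_ne_zero hij) ((mul_divDiff i j f).trans hg.symm)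

theorem divDiff_mul (i j : σ) (g f : MvPolynomial σ R) :
    divDiff i j (g * f) = g * divDiff i j f + divDiff i j g * rename (Equiv.swap i j) f := by
  rcases eq_or_ne i j with rfl | hij
  · simp [divDiff_self]
  apply divDiff_eq_of_mul_eq hij
  rw [map_mul]
  linear_combination g * mul_divDiff i j f + rename (Equiv.swap i j) f * mul_divDiff i j g

theorem divDiff_X (i j m : σ) : divDiff i j (X m : MvPolynomial σ R) =
    (if i = m then 1 else 0) - if j = m then 1 else 0 := by
  rcases eq_or_ne i j with rfl | hij
  · simp [divDiff_self]
  apply divDiff_eq_of_mul_eq hij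
  rw [rename_X]
  rcases eq_or_ne i m with rfl | hi
  · rw [Equiv.swap_apply_left, if_pos rfl, if_neg hij.symm]
    ring
  · rcases eq_or_ne j m with rfl | hj
    · rw [Equiv.swap_apply_right, if_pos rfl, if_neg hi]
      ring
    · rw [Equiv.swap_apply_of_ne_of_ne hi.symm hj.symm, if_neg hi, if_neg hj]
      ring

theorem divDiff_swap (i j : σ) (f : MvPolynomial σ R) : divDiff j i f = -divDiff i j f := by
  rcases eq_or_ne i j with rfl | hij
  · simp [divDiff_self]
  apply divDiff_eq_of_mul_eq hij.symm
  rw [Equiv.swap_comm, ← mul_divDiff i j f]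
  ring

theorem rename_divDiff (w : Equiv.Perm σ) (i j : σ) (f : MvPolynomial σ R) :
    rename w (divDiff i j f) = divDiff (w i) (w j) (rename w f) := by
  rcases eq_or_ne i j with rfl | hij
  · simp [divDiff_self]
  symm
  apply divDiff_eq_of_mul_eq (w.injective.ne hij)
  rw [← rename_X w i, ← rename_X w j, ← map_sub, ← map_mul, mul_divDiff, map_sub, rename_rename,
    rename_rename]
  congr 2
  ext m : 1
  rw [rename_X, rename_X, Function.comp_apply, Function.comp_apply, ← Equiv.Perm.mul_apply,
    ← Equiv.Perm.mul_apply, Equiv.mul_swap_eq_swap_mul]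

theorem divDiff_of_rename_eq {i j : σ} {f : MvPolynomial σ R}
    (h : rename (Equiv.swap i j) f = f) : divDiff i j f = 0 := by
  rcases eq_or_ne i j with rfl | hij
  · exact divDiff_self i f
  · exact divDiff_eq_of_mul_eq hij (by rw [h, sub_self, mul_zero])

theorem divDiff_of_isHomogeneous_zero (i j : σ) {f : MvPolynomial σ R} (hf : f.IsHomogeneous 0) :
    divDiff i j f = 0 := by
  obtain ⟨r, rfl⟩ := exists_eq_C_of_isHomogeneous_zero hf
  exact divDiff_of_rename_eq (rename_C _ _)

theorem isHomogeneous_divDiff (i j : σ) {f : MvPolynomial σ R} {d : ℕ}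
    (hf : f.IsHomogeneous (d + 1)) : (divDiff i j f).IsHomogeneous d := by
  rcases eq_or_ne i j with rfl | hij
  · rw [divDiff_self]
    exact isHomogeneous_zero _ _ _
  have hX : (X i - X j : MvPolynomial σ R).IsHomogeneous 1 :=
    (isHomogeneous_X R i).sub (isHomogeneous_X R j)
  have hcomp := homogeneousComponent_add_mul hX (divDiff i j f) d
  rw [mul_comm, mul_divDiff, homogeneousComponent_of_mem (n := d + 1)
    ((mem_homogeneousSubmodule _ _).2 (hf.sub hf.rename_isHomogeneous)), if_pos rfl,
    mul_comm] at hcomp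
  rw [divDiff_eq_of_mul_eq hij hcomp.symm]
  exact homogeneousComponent_isHomogeneous _ _

end DividedDifferences

section DunklOperators

variable {σ R : Type*} [CommRing R] [IsDomain R] [DecidableEq σ] [Fintype σ]

/-- The Dunkl operator `∂ᵢ - c ∑ⱼ (1 - sᵢⱼ) / (xᵢ - xⱼ)` of the symmetric group. -/
noncomputable def dunkl (c : R) (i : σ) : Module.End R (MvPolynomial σ R) :=
  (pderiv i : Derivation R (MvPolynomial σ R) (MvPolynomial σ R)).toLinearMap -
    c • ∑ j, divDiff i j

theorem dunkl_apply (c : R) (i : σ) (f : MvPolynomial σ R) :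
    dunkl c i f = pderiv i f - C c * ∑ j, divDiff i j f := by
  rw [dunkl, LinearMap.sub_apply, LinearMap.smul_apply, LinearMap.sum_apply, smul_eq_C_mul]
  rfl

theorem dunkl_mul (c : R) (i : σ) (g f : MvPolynomial σ R) :
    dunkl c i (g * f) = g * dunkl c i f + pderiv i g * f -
      C c * ∑ j, divDiff i j g * rename (Equiv.swap i j) f := by
  simp only [dunkl_apply, divDiff_mul, Finset.sum_add_distrib, Derivation.leibniz, smul_eq_mul,
    ← Finset.mul_sum]
  ring

theorem dunkl_X_mul (c : R) (i j : σ) (f : MvPolynomial σ R) :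
    dunkl c i (X j * f) = X j * dunkl c i f + C c * rename (Equiv.swap i j) f +
      if i = j then f - C c * ∑ m, rename (Equiv.swap j m) f else 0 := by
  rw [dunkl_mul, pderiv_X]
  simp only [divDiff_X, sub_mul, Finset.sum_sub_distrib, ite_mul, one_mul, zero_mul,
    Finset.sum_ite_eq', Finset.mem_univ, if_true]
  rcases eq_or_ne i j with rfl | h
  · simp only [Pi.single_eq_same, if_true]
    ring
  · simp only [Pi.single_eq_of_ne' h, if_neg h, Finset.sum_const_zero]
    ring

theorem rename_dunkl (c : R) (w : Equiv.Perm σ) (i : σ) (f : MvPolynomial σ R) :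
    rename w (dunkl c i f) = dunkl c (w i) (rename w f) := by
  rw [dunkl_apply, dunkl_apply, map_sub, map_mul, rename_C, map_sum, pderiv_rename w.injective,
    ← Equiv.sum_comp w fun j => divDiff (w i) j (rename w f)]
  simp only [rename_divDiff]

theorem isHomogeneous_dunkl (c : R) (i : σ) {f : MvPolynomial σ R} {d : ℕ}
    (hf : f.IsHomogeneous (d + 1)) : (dunkl c i f).IsHomogeneous d := by
  rw [dunkl_apply]
  refine IsHomogeneous.sub ?_ ?_
  · simpa using hf.pderiv
  · simpa using (isHomogeneous_C σ c).mul
      (IsHomogeneous.sum Finset.univ _ d fun j _ => isHomogeneous_divDiff i j hf)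

theorem dunkl_of_isHomogeneous_zero (c : R) (i : σ) {f : MvPolynomial σ R}
    (hf : f.IsHomogeneous 0) : dunkl c i f = 0 := by
  rw [dunkl_apply, Finset.sum_eq_zero fun j _ => divDiff_of_isHomogeneous_zero i j hf]
  obtain ⟨r, rfl⟩ := exists_eq_C_of_isHomogeneous_zero hf
  rw [pderiv_C, mul_zero, sub_zero]

theorem two_mul_sum_X_mul_divDiff (f : MvPolynomial σ R) :
    2 * ∑ i, ∑ j, X i * divDiff i j f = ∑ i, ∑ j, (f - rename (Equiv.swap i j) f) := by
  have hanti : ∑ i : σ, ∑ j : σ, X i * divDiff i j f =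
      ∑ i : σ, ∑ j : σ, -(X j * divDiff i j f) := by
    rw [Finset.sum_comm]
    refine Finset.sum_congr rfl fun i _ => Finset.sum_congr rfl fun j _ => ?_
    rw [divDiff_swap i j, mul_neg]
  rw [two_mul]
  nth_rewrite 2 [hanti]
  simp only [← Finset.sum_add_distrib, ← mul_divDiff, sub_mul, ← sub_eq_add_neg]

theorem two_mul_sum_X_mul_dunkl (c : R) (f : MvPolynomial σ R) :
    2 * ∑ i, X i * dunkl c i f = 2 * ∑ i, X i * pderiv i f -
      C (c * Fintype.card σ ^ 2) * f + C c * ∑ i, ∑ j, rename (Equiv.swap i j) f := by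
  have hdiv := two_mul_sum_X_mul_divDiff f
  simp only [Finset.sum_sub_distrib, Finset.sum_const, Finset.card_univ, nsmul_eq_mul,
    ← Finset.mul_sum] at hdiv
  have hdunkl : ∑ i, X i * dunkl c i f =
      ∑ i, X i * pderiv i f - C c * ∑ i, X i * ∑ j, divDiff i j f := by
    simp only [dunkl_apply, mul_sub, Finset.sum_sub_distrib, Finset.mul_sum, mul_left_comm]
  rw [hdunkl, map_mul, map_pow, map_natCast]
  linear_combination -C c * hdiv

end DunklOperators

section DunklSingularVectors

variable {σ K : Type*} [Field K] [CharZero K] [Fintype σ]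

theorem coeff_X_mul_derivative {R : Type*} [CommRing R] (f : PowerSeries R) (n : ℕ) :
    PowerSeries.coeff n (PowerSeries.X * PowerSeries.derivative _ f) =
      n * PowerSeries.coeff n f := by
  cases n with
  | zero => simp
  | succ n =>
    rw [PowerSeries.coeff_succ_X_mul, PowerSeries.coeff_derivative, mul_comm, Nat.cast_succ]

variable (K) in
/-- The divided difference `(f_l - f_j) / (x_l - x_j)` of the singular vectors, in a form that also
makes sense for `l = j`. -/
noncomputable def singularDivDiff (b : ℕ) (l j : σ) : MvPolynomial σ K :=
  PowerSeries.coeff b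
    (PowerSeries.X * (genSeries (dunklParameter K σ b) l * binomPow (-1 : K) (X j)))

theorem singularVector_sub_singularVector (b : ℕ) (l j : σ) :
    singularVector K b l - singularVector K b j = (X l - X j) * singularDivDiff K b l j := by
  rw [singularVector, singularVector, ← map_sub, genSeries_sub_genSeries, PowerSeries.coeff_C_mul,
    singularDivDiff]

theorem pderiv_singularVector_self (b : ℕ) (l : σ) :
    pderiv l (singularVector K b l) =
      C (1 - dunklParameter K σ b) * singularDivDiff K b l l := by
  rw [singularVector, ← coeff_coeffDerivation, coeffDerivation_pderiv_genSeries_self,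
    PowerSeries.coeff_C_mul, singularDivDiff]

theorem pderiv_singularVector_of_ne (b : ℕ) {l i : σ} (h : l ≠ i) :
    pderiv i (singularVector K b l) = -C (dunklParameter K σ b) * singularDivDiff K b l i := by
  rw [singularVector, ← coeff_coeffDerivation, coeffDerivation_pderiv_genSeries_of_ne _ h,
    ← map_neg, PowerSeries.coeff_C_mul, singularDivDiff]

theorem singularDivDiff_self [Nonempty σ] {b : ℕ} (hb : 0 < b) (l : σ) :
    singularDivDiff K b l l = C (dunklParameter K σ b) * ∑ j, singularDivDiff K b l j := by
  obtain ⟨n, rfl⟩ := Nat.exists_eq_add_one.2 hb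
  have hcard : dunklParameter K σ (n + 1) * Fintype.card σ - 1 = n := by
    rw [mul_comm, ← nsmul_eq_mul, card_nsmul_dunklParameter, Nat.cast_succ, add_sub_cancel_right]
  have hder := congrArg (PowerSeries.coeff n)
    (X_mul_derivative_genSeries (dunklParameter K σ (n + 1)) l)
  rw [coeff_X_mul_derivative, hcard, map_sub, map_add, PowerSeries.coeff_C_mul,
    PowerSeries.coeff_C_mul, map_sum, map_natCast] at hder
  simp only [singularDivDiff, PowerSeries.coeff_succ_X_mul]
  linear_combination -hder

variable [DecidableEq σ]

theorem divDiff_singularVector_left (b : ℕ) {l j : σ} (h : l ≠ j) :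
    divDiff l j (singularVector K b l) = singularDivDiff K b l j :=
  divDiff_eq_of_mul_eq h (by
    rw [rename_singularVector, Equiv.swap_apply_left, singularVector_sub_singularVector])

theorem divDiff_singularVector_right (b : ℕ) {l i : σ} (h : l ≠ i) :
    divDiff i l (singularVector K b l) = -singularDivDiff K b l i := by
  rw [divDiff_swap, divDiff_singularVector_left b h]

theorem divDiff_singularVector_of_ne (b : ℕ) {l i j : σ} (hi : l ≠ i) (hj : l ≠ j) :
    divDiff i j (singularVector K b l) = 0 :=
  divDiff_of_rename_eq (by rw [rename_singularVector, Equiv.swap_apply_of_ne_of_ne hi hj])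

theorem dunkl_singularVector [Nonempty σ] {b : ℕ} (hb : 0 < b) (i l : σ) :
    dunkl (dunklParameter K σ b) i (singularVector K b l) = 0 := by
  rw [dunkl_apply]
  rcases eq_or_ne l i with rfl | hi
  · have hdiv (j : σ) : divDiff l j (singularVector K b l) =
        singularDivDiff K b l j - if l = j then singularDivDiff K b l l else 0 := by
      split_ifs with h
      · rw [← h, divDiff_self, sub_self]
      · rw [sub_zero, divDiff_singularVector_left b h]
    simp only [hdiv, Finset.sum_sub_distrib, Finset.sum_ite_eq, Finset.mem_univ, if_true]
    rw [pderiv_singularVector_self, mul_sub, ← singularDivDiff_self hb, map_sub, C_1]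
    ring
  · rw [Finset.sum_eq_single_of_mem l (Finset.mem_univ l)
      fun j _ hj => divDiff_singularVector_of_ne b hi hj.symm, divDiff_singularVector_right b hi,
      pderiv_singularVector_of_ne b hi]
    ring

theorem dunkl_mem_singularIdeal [Nonempty σ] {b : ℕ} (hb : 0 < b) (i : σ) {f : MvPolynomial σ K}
    (hf : f ∈ singularIdeal K σ b) :
    dunkl (dunklParameter K σ b) i f ∈ singularIdeal K σ b := by
  rw [singularIdeal] at hf
  induction hf using Submodule.span_induction with
  | mem x hx =>
    obtain ⟨l, rfl⟩ := hx
    rw [dunkl_singularVector hb]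
    exact zero_mem _
  | zero => rw [map_zero]; exact zero_mem _
  | add x y _ _ hx hy => rw [map_add]; exact add_mem hx hy
  | smul g x hx ih =>
    rw [smul_eq_mul, dunkl_mul]
    refine sub_mem (add_mem (Ideal.mul_mem_left _ _ ih) (Ideal.mul_mem_left _ _ hx))
      (Ideal.mul_mem_left _ _ (Ideal.sum_mem _ fun j _ => Ideal.mul_mem_left _ _ ?_))
    exact permStable_singularIdeal b _ x hx

end DunklSingularVectors

section DunklLaplacian

theorem map_C_mul {σ R : Type*} [CommRing R] (φ : Module.End R (MvPolynomial σ R)) (r : R)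
    (f : MvPolynomial σ R) : φ (C r * f) = C r * φ f := by
  rw [← smul_eq_C_mul, map_smul, smul_eq_C_mul]

theorem card_mul_C_inv_card {σ K : Type*} [Field K] [CharZero K] [Fintype σ] [Nonempty σ] :
    (Fintype.card σ : MvPolynomial σ K) * C (Fintype.card σ : K)⁻¹ = 1 := by
  rw [← map_natCast C, ← C_mul, mul_inv_cancel₀ (Nat.cast_ne_zero.2 Fintype.card_ne_zero), C_1]

variable {σ K : Type*} [Field K] [DecidableEq σ] [Fintype σ]

variable (σ) in
/-- The sum of the Dunkl operators. -/
noncomputable def dunklSum (c : K) : Module.End K (MvPolynomial σ K) :=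
  ∑ i, dunkl c i

variable (σ) in
/-- The Dunkl Laplacian of the reflection representation: the sum of the squares of the Dunkl
operators, corrected by `(dunklSum σ c) ^ 2 / |σ|` so that it commutes with the sum of the
variables. -/
noncomputable def dunklLaplacian (c : K) : Module.End K (MvPolynomial σ K) :=
  ∑ i, dunkl c i * dunkl c i - (Fintype.card σ : K)⁻¹ • (dunklSum σ c * dunklSum σ c)

theorem dunklSum_apply (c : K) (f : MvPolynomial σ K) : dunklSum σ c f = ∑ i, dunkl c i f :=
  LinearMap.sum_apply _ _ _

theorem dunklLaplacian_apply (c : K) (f : MvPolynomial σ K) :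
    dunklLaplacian σ c f = ∑ i, dunkl c i (dunkl c i f) -
      C (Fintype.card σ : K)⁻¹ * dunklSum σ c (dunklSum σ c f) := by
  rw [dunklLaplacian, LinearMap.sub_apply, LinearMap.smul_apply, LinearMap.sum_apply, smul_eq_C_mul]
  rfl

theorem dunklSum_X_mul (c : K) (j : σ) (f : MvPolynomial σ K) :
    dunklSum σ c (X j * f) = X j * dunklSum σ c f + f := by
  simp only [dunklSum_apply, dunkl_X_mul, Finset.sum_add_distrib, Finset.sum_ite_eq',
    Finset.mem_univ, if_true, Equiv.swap_comm j, ← Finset.mul_sum]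
  ring

theorem dunkl_dunkl_X_mul (c : K) (i j : σ) (f : MvPolynomial σ K) :
    dunkl c i (dunkl c i (X j * f)) =
      X j * dunkl c i (dunkl c i f) + (C c * dunkl c j (rename (Equiv.swap j i) f) +
        C c * rename (Equiv.swap j i) (dunkl c j f)) +
      if i = j then 2 * dunkl c j f - C c * ∑ m, dunkl c j (rename (Equiv.swap j m) f) -
        C c * ∑ m, rename (Equiv.swap j m) (dunkl c j f) else 0 := by
  have hleft : dunkl c i (rename (Equiv.swap j i) f) = rename (Equiv.swap j i) (dunkl c j f) := by
    rw [rename_dunkl, Equiv.swap_apply_left]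
  have hright : rename (Equiv.swap j i) (dunkl c i f) = dunkl c j (rename (Equiv.swap j i) f) := by
    rw [rename_dunkl, Equiv.swap_apply_right]
  rw [dunkl_X_mul, map_add, map_add, dunkl_X_mul, map_C_mul, apply_ite (dunkl c i), map_zero,
    map_sub, map_C_mul, map_sum, Equiv.swap_comm i j, hleft, hright]
  rcases eq_or_ne i j with rfl | h
  · simp only [if_true]
    ring
  · simp only [if_neg h]
    ring

theorem sum_dunkl_dunkl_X_mul (c : K) (j : σ) (f : MvPolynomial σ K) :
    ∑ i, dunkl c i (dunkl c i (X j * f)) =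
      X j * ∑ i, dunkl c i (dunkl c i f) + 2 * dunkl c j f := by
  simp only [dunkl_dunkl_X_mul, Finset.sum_add_distrib, Finset.sum_ite_eq', Finset.mem_univ,
    if_true, ← Finset.mul_sum]
  ring

theorem dunklLaplacian_X_mul (c : K) (j : σ) (f : MvPolynomial σ K) :
    dunklLaplacian σ c (X j * f) = X j * dunklLaplacian σ c f + 2 * dunkl c j f -
      C (2 * (Fintype.card σ : K)⁻¹) * dunklSum σ c f := by
  rw [dunklLaplacian_apply, dunklLaplacian_apply, sum_dunkl_dunkl_X_mul, dunklSum_X_mul, map_add,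
    dunklSum_X_mul, map_mul, map_ofNat]
  ring

theorem dunklLaplacian_X_sq_mul (c : K) (j : σ) (f : MvPolynomial σ K) :
    dunklLaplacian σ c (X j ^ 2 * f) = X j ^ 2 * dunklLaplacian σ c f +
      4 * (X j * dunkl c j f) + 2 * f + 2 * C c * f - 2 * C c * ∑ m, rename (Equiv.swap j m) f -
        C (4 * (Fintype.card σ : K)⁻¹) * (X j * dunklSum σ c f) -
          C (2 * (Fintype.card σ : K)⁻¹) * f := by
  rw [sq, mul_assoc, dunklLaplacian_X_mul, dunklLaplacian_X_mul, dunklSum_X_mul, dunkl_X_mul,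
    if_pos rfl, Equiv.swap_self, Equiv.coe_refl, rename_id, AlgHom.id_apply]
  simp only [map_mul, map_ofNat]
  ring

theorem isHomogeneous_dunklSum (c : K) {f : MvPolynomial σ K} {d : ℕ}
    (hf : f.IsHomogeneous (d + 1)) : (dunklSum σ c f).IsHomogeneous d := by
  rw [dunklSum_apply]
  exact IsHomogeneous.sum _ _ _ fun i _ => isHomogeneous_dunkl c i hf

theorem dunklSum_of_isHomogeneous_zero (c : K) {f : MvPolynomial σ K} (hf : f.IsHomogeneous 0) :
    dunklSum σ c f = 0 := by
  rw [dunklSum_apply]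
  exact Finset.sum_eq_zero fun i _ => dunkl_of_isHomogeneous_zero c i hf

theorem isHomogeneous_dunklLaplacian (c : K) {f : MvPolynomial σ K} {d : ℕ}
    (hf : f.IsHomogeneous (d + 2)) : (dunklLaplacian σ c f).IsHomogeneous d := by
  rw [dunklLaplacian_apply]
  refine (IsHomogeneous.sum _ _ _ fun i _ =>
    isHomogeneous_dunkl c i (isHomogeneous_dunkl c i hf)).sub ?_
  simpa using (isHomogeneous_C σ _).mul (isHomogeneous_dunklSum c (isHomogeneous_dunklSum c hf))

theorem dunklLaplacian_of_lt_two (c : K) {f : MvPolynomial σ K} {d : ℕ} (hd : d < 2)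
    (hf : f.IsHomogeneous d) : dunklLaplacian σ c f = 0 := by
  rw [dunklLaplacian_apply]
  interval_cases d
  · simp [dunkl_of_isHomogeneous_zero c _ hf, dunklSum_of_isHomogeneous_zero c hf]
  · simp [dunkl_of_isHomogeneous_zero c _ (isHomogeneous_dunkl c _ hf),
      dunklSum_of_isHomogeneous_zero c (isHomogeneous_dunklSum c hf)]

theorem isHomogeneous_dunklLaplacian_pow (c : K) {f : MvPolynomial σ K} {d : ℕ}
    (hf : f.IsHomogeneous d) (n : ℕ) :
    ((dunklLaplacian σ c ^ n) f).IsHomogeneous (d - 2 * n) := by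
  induction n with
  | zero => simpa using hf
  | succ n ih =>
    rw [pow_succ', Module.End.mul_apply]
    rcases lt_or_ge (d - 2 * n) 2 with h | h
    · rw [dunklLaplacian_of_lt_two c h ih]
      exact isHomogeneous_zero _ _ _
    · obtain ⟨e, he⟩ := Nat.exists_eq_add_of_le' h
      rw [show d - 2 * (n + 1) = e by omega]
      exact isHomogeneous_dunklLaplacian c (he ▸ ih)

theorem dunklLaplacian_pow_eq_zero (c : K) {f : MvPolynomial σ K} {d n : ℕ}
    (hf : f.IsHomogeneous d) (hn : d < 2 * n) : (dunklLaplacian σ c ^ n) f = 0 := by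
  obtain ⟨n, rfl⟩ := Nat.exists_eq_add_one.2 (show 0 < n by omega)
  rw [pow_succ', Module.End.mul_apply]
  exact dunklLaplacian_of_lt_two c (by omega) (isHomogeneous_dunklLaplacian_pow c hf n)

theorem sum_X_mul_pderiv_dunklLaplacian_pow (c : K) {f : MvPolynomial σ K} {d : ℕ}
    (hf : f.IsHomogeneous d) (n : ℕ) :
    ∑ i, X i * pderiv i ((dunklLaplacian σ c ^ n) f) =
      C ((d : K) - 2 * n) * (dunklLaplacian σ c ^ n) f := by
  rcases lt_or_ge d (2 * n) with h | h
  · simp [dunklLaplacian_pow_eq_zero c hf h]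
  · rw [(isHomogeneous_dunklLaplacian_pow c hf n).sum_X_mul_pderiv, nsmul_eq_mul, ← map_natCast C,
      Nat.cast_sub h]
    push_cast
    rfl

variable [CharZero K] [Nonempty σ]

theorem dunklLaplacian_varSum_mul (c : K) (f : MvPolynomial σ K) :
    dunklLaplacian σ c (varSum K σ * f) = varSum K σ * dunklLaplacian σ c f := by
  rw [varSum, Finset.sum_mul, map_sum, Finset.sum_mul]
  simp only [dunklLaplacian_X_mul, Finset.sum_sub_distrib, Finset.sum_add_distrib, Finset.sum_const,
    Finset.card_univ, nsmul_eq_mul, ← Finset.mul_sum, ← dunklSum_apply, map_mul, map_ofNat]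
  linear_combination -2 * dunklSum σ c f * card_mul_C_inv_card (K := K) (σ := σ)

theorem dunklLaplacian_mem_singularSumIdeal {b : ℕ} (hb : 0 < b) {f : MvPolynomial σ K}
    (hf : f ∈ singularSumIdeal K σ b) :
    dunklLaplacian σ (dunklParameter K σ b) f ∈ singularSumIdeal K σ b := by
  obtain ⟨x, hx, y, hy, rfl⟩ := Submodule.mem_sup.1 hf
  obtain ⟨u, rfl⟩ := Ideal.mem_span_singleton'.1 hy
  have hdunklSum {g} (hg : g ∈ singularIdeal K σ b) :
      dunklSum σ (dunklParameter K σ b) g ∈ singularIdeal K σ b := by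
    rw [dunklSum_apply]
    exact Ideal.sum_mem _ fun i _ => dunkl_mem_singularIdeal hb i hg
  rw [map_add, mul_comm u, dunklLaplacian_varSum_mul]
  refine Submodule.add_mem_sup ?_ (Ideal.mul_mem_right _ _ (Ideal.mem_span_singleton_self _))
  rw [dunklLaplacian_apply]
  exact sub_mem (Ideal.sum_mem _ fun i _ =>
    dunkl_mem_singularIdeal hb i (dunkl_mem_singularIdeal hb i hx))
    (Ideal.mul_mem_left _ _ (hdunklSum (hdunklSum hx)))

theorem dunklLaplacian_pow_mem_singularSumIdeal {b : ℕ} (hb : 0 < b) (n : ℕ)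
    {f : MvPolynomial σ K} (hf : f ∈ singularSumIdeal K σ b) :
    (dunklLaplacian σ (dunklParameter K σ b) ^ n) f ∈ singularSumIdeal K σ b := by
  induction n with
  | zero => exact hf
  | succ n ih =>
    rw [pow_succ', Module.End.mul_apply]
    exact dunklLaplacian_mem_singularSumIdeal hb ih

end DunklLaplacian

section Lefschetz

variable {K σ : Type*} [Field K] [Fintype σ]

variable (K σ) in
/-- The sum of the squares of the variables, the raising operator of the `sl₂` that is completed by
the Dunkl Laplacian. -/
noncomputable def sqSum : MvPolynomial σ K := ∑ i, X i ^ 2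

theorem isHomogeneous_sqSum : (sqSum K σ).IsHomogeneous 2 :=
  IsHomogeneous.sum _ _ _ fun i _ => isHomogeneous_X_pow i 2

theorem rename_sqSum (w : Equiv.Perm σ) : rename w (sqSum K σ) = sqSum K σ := by
  rw [sqSum, map_sum]
  exact Fintype.sum_equiv w _ _ fun i => by rw [map_pow, rename_X]

section Injectivity

variable [CharZero K] [Nonempty σ]

theorem natCast_card_sub_one_mul_sub_one {b : ℕ} (hb : 0 < b) :
    (((Fintype.card σ - 1) * (b - 1) : ℕ) : K) =
      (1 - Fintype.card σ) * (1 - dunklParameter K σ b * Fintype.card σ) := by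
  rw [mul_comm (dunklParameter K σ b), ← nsmul_eq_mul, card_nsmul_dunklParameter, Nat.cast_mul,
    Nat.cast_sub hb, Nat.cast_sub Fintype.card_pos]
  push_cast
  ring

variable [DecidableEq σ]

theorem dunklLaplacian_sqSum_mul (c : K) (f : MvPolynomial σ K) :
    dunklLaplacian σ c (sqSum K σ * f) = sqSum K σ * dunklLaplacian σ c f +
      4 * ∑ i, X i * pderiv i f -
        C (2 * (1 - Fintype.card σ) * (1 - c * Fintype.card σ)) * f -
        varSum K σ * (C (4 * (Fintype.card σ : K)⁻¹) * dunklSum σ c f) := by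
  rw [sqSum, Finset.sum_mul, map_sum]
  simp only [dunklLaplacian_X_sq_mul, Finset.sum_sub_distrib, Finset.sum_add_distrib,
    Finset.sum_const, Finset.card_univ, nsmul_eq_mul, ← Finset.mul_sum, ← Finset.sum_mul]
  rw [← varSum]
  have heuler := two_mul_sum_X_mul_dunkl c f
  simp only [map_mul, map_ofNat, map_sub, map_one, map_natCast, map_pow] at heuler ⊢
  linear_combination 2 * heuler - 2 * f * card_mul_C_inv_card (K := K) (σ := σ)

theorem exists_dunklLaplacian_sqSum_mul_pow (c : K) {f : MvPolynomial σ K} {d : ℕ}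
    (hf : f.IsHomogeneous d) (n : ℕ) :
    ∃ v, dunklLaplacian σ c (sqSum K σ * (dunklLaplacian σ c ^ n) f) =
      sqSum K σ * (dunklLaplacian σ c ^ (n + 1)) f +
        C (4 * (d - 2 * n) - 2 * ((1 - Fintype.card σ) * (1 - c * Fintype.card σ))) *
          (dunklLaplacian σ c ^ n) f + varSum K σ * v := by
  refine ⟨-(C (4 * (Fintype.card σ : K)⁻¹) * dunklSum σ c ((dunklLaplacian σ c ^ n) f)), ?_⟩
  rw [dunklLaplacian_sqSum_mul, sum_X_mul_pderiv_dunklLaplacian_pow c hf, pow_succ',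
    Module.End.mul_apply, mul_assoc 2]
  simp only [map_mul, map_sub, map_ofNat]
  ring

/-- The commutation relation of `sl₂` modulo the sum of the variables. -/
theorem exists_dunklLaplacian_pow_sqSum_mul (c : K) {f : MvPolynomial σ K} {d : ℕ}
    (hf : f.IsHomogeneous d) (n : ℕ) :
    ∃ v, (dunklLaplacian σ c ^ (n + 1)) (sqSum K σ * f) =
      sqSum K σ * (dunklLaplacian σ c ^ (n + 1)) f +
        C ((n + 1) * (4 * d - 4 * n - 2 * ((1 - Fintype.card σ) * (1 - c * Fintype.card σ)))) *
          (dunklLaplacian σ c ^ n) f + varSum K σ * v := by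
  induction n with
  | zero =>
    obtain ⟨v, hv⟩ := exists_dunklLaplacian_sqSum_mul_pow c hf 0
    exact ⟨v, by simpa using hv⟩
  | succ n ih =>
    obtain ⟨v, hv⟩ := ih
    obtain ⟨u, hu⟩ := exists_dunklLaplacian_sqSum_mul_pow c hf (n + 1)
    refine ⟨u + dunklLaplacian σ c v, ?_⟩
    rw [pow_succ', Module.End.mul_apply, hv, map_add, map_add, hu, dunklLaplacian_varSum_mul,
      map_C_mul, ← Module.End.mul_apply (dunklLaplacian σ c) (dunklLaplacian σ c ^ n),
      ← pow_succ', ← pow_succ']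
    simp only [map_mul, map_sub, map_add, map_ofNat, map_natCast, map_one]
    push_cast
    ring

theorem dunklLaplacian_pow_mem_of_succ {b : ℕ} (hb : 0 < b) {f : MvPolynomial σ K} {d : ℕ}
    (hf : f.IsHomogeneous d) (hd : 2 * d < (Fintype.card σ - 1) * (b - 1))
    (hmul : sqSum K σ * f ∈ singularSumIdeal K σ b) {n : ℕ}
    (hn : (dunklLaplacian σ (dunklParameter K σ b) ^ (n + 1)) f ∈ singularSumIdeal K σ b) :
    (dunklLaplacian σ (dunklParameter K σ b) ^ n) f ∈ singularSumIdeal K σ b := by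
  obtain ⟨v, hv⟩ := exists_dunklLaplacian_pow_sqSum_mul (dunklParameter K σ b) hf n
  rw [← natCast_card_sub_one_mul_sub_one hb] at hv
  set r : K := (n + 1) * (4 * d - 4 * n - 2 * ((Fintype.card σ - 1) * (b - 1) : ℕ))
  have hr0 : r ≠ 0 := by
    refine mul_ne_zero (Nat.cast_add_one_ne_zero n) (sub_ne_zero.2 fun h => ?_)
    rw [sub_eq_iff_eq_add] at h
    have hnat : 4 * d = 2 * ((Fintype.card σ - 1) * (b - 1)) + 4 * n := by exact_mod_cast h
    omega
  have hvarSum : varSum K σ * v ∈ singularSumIdeal K σ b :=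
    Ideal.mul_mem_right _ _ (Ideal.mem_sup_right (Ideal.mem_span_singleton_self _))
  have hCr := sub_mem (sub_mem (dunklLaplacian_pow_mem_singularSumIdeal hb (n + 1) hmul)
    (Ideal.mul_mem_left _ (sqSum K σ) hn)) hvarSum
  rw [hv, sub_right_comm, add_sub_cancel_right, add_sub_cancel_left] at hCr
  have hinv := Ideal.mul_mem_left _ (C r⁻¹) hCr
  rwa [← mul_assoc, ← C_mul, inv_mul_cancel₀ hr0, C_1, one_mul] at hinv

omit [DecidableEq σ] in
theorem mem_singularSumIdeal_of_sqSum_mul_mem {b : ℕ} (hb : 0 < b) {f : MvPolynomial σ K} {d : ℕ}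
    (hf : f.IsHomogeneous d) (hd : 2 * d < (Fintype.card σ - 1) * (b - 1))
    (hmul : sqSum K σ * f ∈ singularSumIdeal K σ b) : f ∈ singularSumIdeal K σ b := by
  classical
  have hdescent (n : ℕ) (hn : (dunklLaplacian σ (dunklParameter K σ b) ^ n) f ∈
      singularSumIdeal K σ b) : f ∈ singularSumIdeal K σ b := by
    induction n with
    | zero => exact hn
    | succ n ih => exact ih (dunklLaplacian_pow_mem_of_succ hb hf hd hmul hn)
  refine hdescent (d + 1) ?_
  rw [dunklLaplacian_pow_eq_zero _ hf (by omega)]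
  exact zero_mem _

end Injectivity

section Isotypic

variable [CharZero K]

theorem isHomogeneous_ideal_singularSumIdeal (b : ℕ) :
    (singularSumIdeal K σ b).IsHomogeneous (homogeneousSubmodule σ K) :=
  isHomogeneous_ideal_singularIdeal.sup <| Ideal.homogeneous_span _ _ <| by
    rintro _ rfl
    exact ⟨1, isHomogeneous_varSum⟩

theorem permStable_singularSumIdeal (b : ℕ) : PermStable (singularSumIdeal K σ b) := by
  intro w
  change singularSumIdeal K σ b ≤ (singularSumIdeal K σ b).comap (rename w)
  refine sup_le (fun p hp => Ideal.mem_sup_left (permStable_singularIdeal b w p hp)) ?_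
  rw [Ideal.span_singleton_le_iff_mem, Ideal.mem_comap, rename_varSum]
  exact Ideal.mem_sup_right (Ideal.mem_span_singleton_self _)

theorem coeff_hilbertSeries_isotypic_singularSumIdeal_le {α β : Type*} [Fintype α] [DecidableEq α]
    [Fintype β] [Nonempty (α ⊕ β)] {b d : ℕ} (hb : 0 < b)
    (hd : 2 * d < (Fintype.card (α ⊕ β) - 1) * (b - 1)) :
    PowerSeries.coeff d (hilbertSeries (isotypic K α β) (singularSumIdeal K (α ⊕ β) b)) ≤
      PowerSeries.coeff (d + 2)
        (hilbertSeries (isotypic K α β) (singularSumIdeal K (α ⊕ β) b)) := by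
  classical
  exact coeff_hilbertSeries_le_coeff_add isHomogeneousProj_isoProj (isoProj_mul rename_sqSum)
    (fun _ hp => (permStable_singularSumIdeal b).isoProj_mem hp)
    (isHomogeneous_ideal_singularSumIdeal b) isHomogeneous_sqSum fun u hu h =>
      mem_singularSumIdeal_of_sqSum_mul_mem hb hu hd (by rwa [mul_comm])

end Isotypic

end Lefschetz

theorem hilbertSeries_isotypic_singularSumIdeal_eq_coe {K α β : Type*} [Field K] [IsAlgClosed K]
    [CharZero K] [Fintype α] [DecidableEq α] [Fintype β] [Nonempty (α ⊕ β)]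
    {b : ℕ} (hb : 0 < b) (hab : (Fintype.card (α ⊕ β)).Coprime b) (hαb : Fintype.card α ≤ b)
    {C : Polynomial ℤ}
    (hC : qInt (b + Fintype.card β) * C * (qFactorial (Fintype.card α) *
      qFactorial (Fintype.card β) * qFactorial (b - Fintype.card α)) =
        qFactorial (b + Fintype.card β)) :
    hilbertSeries (isotypic K α β) (singularSumIdeal K (α ⊕ β) b) =
      ((Polynomial.X ^ (Fintype.card α).choose 2 * C : Polynomial ℤ) : PowerSeries ℤ) := by
  apply mul_left_cancel₀ (one_sub_X_pow_ne_zero hb)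
  rw [hilbertSeries_isotypic_singularSumIdeal hb hab, hilbertSeries_isotypic_span_range_X_pow]
  simpa only [Polynomial.coe_mul, Polynomial.coe_sub, Polynomial.coe_pow, Polynomial.coe_one,
    Polynomial.coe_X] using congrArg (fun p : Polynomial ℤ => (p : PowerSeries ℤ))
      (one_sub_X_mul_subsetGen_mul_multisetGen hb hαb hC)

end QuotientsOfPolynomialRings

section PalindromicPolynomials

theorem coeff_qInt (n i : ℕ) : (qInt n).coeff i = if i < n then 1 else 0 := by
  simp [qInt, Polynomial.coeff_X_pow]

theorem natDegree_qInt (n : ℕ) : (qInt n).natDegree = n - 1 := by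
  cases n with
  | zero => simp [qInt]
  | succ n =>
    refine Polynomial.natDegree_eq_of_le_of_coeff_ne_zero ?_ (by simp [coeff_qInt])
    rw [Polynomial.natDegree_le_iff_coeff_eq_zero]
    intro i hi
    rw [coeff_qInt, if_neg (by omega)]

theorem reverse_qInt (n : ℕ) : (qInt n).reverse = qInt n := by
  ext i
  rw [Polynomial.coeff_reverse, natDegree_qInt, coeff_qInt, coeff_qInt]
  rcases le_or_gt i (n - 1) with h | h
  · rw [Polynomial.revAt_le h]
    exact if_congr (by omega) rfl rfl
  · rw [Polynomial.revAt_eq_self_of_lt h]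

theorem reverse_qFactorial (n : ℕ) : (qFactorial n).reverse = qFactorial n := by
  induction n with
  | zero => simpa [qFactorial] using Polynomial.reverse_C (1 : ℤ)
  | succ n ih => rw [qFactorial_succ, Polynomial.reverse_mul_of_domain, reverse_qInt, ih]

theorem natDegree_qFactorial (n : ℕ) : (qFactorial n).natDegree = n.choose 2 := by
  induction n with
  | zero => simp [qFactorial]
  | succ n ih =>
    rw [qFactorial_succ, Polynomial.natDegree_mul (qInt_ne_zero n.succ_ne_zero)
      (qFactorial_ne_zero n), natDegree_qInt, ih, Nat.choose_succ_succ' n 1, Nat.choose_one_right,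
      Nat.succ_sub_one]

variable {k l b : ℕ} {C : Polynomial ℤ}

theorem reverse_eq_of_qInt_mul_eq (hb : 0 < b)
    (hC : qInt (b + l) * C * (qFactorial k * qFactorial l * qFactorial (b - k)) =
      qFactorial (b + l)) : C.reverse = C := by
  have hrev := congrArg Polynomial.reverse hC
  simp only [Polynomial.reverse_mul_of_domain, reverse_qInt, reverse_qFactorial] at hrev
  have hfactorial := mul_right_cancel₀ (mul_ne_zero (mul_ne_zero (qFactorial_ne_zero k)
    (qFactorial_ne_zero l)) (qFactorial_ne_zero (b - k))) (hrev.trans hC.symm)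
  exact mul_left_cancel₀ (qInt_ne_zero (by omega)) hfactorial

theorem natDegree_add_choose_two_of_qInt_mul_eq
    (hC : qInt (b + l) * C * (qFactorial k * qFactorial l * qFactorial (b - k)) =
      qFactorial (b + l)) :
    b + l - 1 + C.natDegree + (k.choose 2 + l.choose 2 + (b - k).choose 2) =
      (b + l).choose 2 := by
  have hne := hC ▸ qFactorial_ne_zero (b + l)
  have hleft := left_ne_zero_of_mul hne
  have hdeg := congrArg Polynomial.natDegree hC
  rwa [Polynomial.natDegree_mul hleft (right_ne_zero_of_mul hne),
    Polynomial.natDegree_mul (left_ne_zero_of_mul hleft) (right_ne_zero_of_mul hleft),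
    Polynomial.natDegree_mul (mul_ne_zero (qFactorial_ne_zero _) (qFactorial_ne_zero _))
      (qFactorial_ne_zero _), Polynomial.natDegree_mul (qFactorial_ne_zero _)
      (qFactorial_ne_zero _), natDegree_qInt, natDegree_qFactorial, natDegree_qFactorial,
    natDegree_qFactorial, natDegree_qFactorial] at hdeg

theorem natDegree_add_two_mul_choose_two (hb : 0 < b) (hk : k ≤ b) (hkl : 0 < k + l)
    (hC : qInt (b + l) * C * (qFactorial k * qFactorial l * qFactorial (b - k)) =
      qFactorial (b + l)) : C.natDegree + 2 * k.choose 2 = (k + l - 1) * (b - 1) := by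
  have hdeg := congrArg (Nat.cast (R := ℚ)) (natDegree_add_choose_two_of_qInt_mul_eq hC)
  apply Nat.cast_injective (R := ℚ)
  push_cast [Nat.cast_choose_two, Nat.cast_sub hk, Nat.cast_sub (show 1 ≤ b from hb),
    Nat.cast_sub (show 1 ≤ k + l from hkl),
    Nat.cast_sub (show 1 ≤ b + l from hb.trans_le le_self_add)] at hdeg ⊢
  linear_combination hdeg

theorem UnimodalSeq.of_step {f : ℕ → ℤ} {m : ℕ} (hmono : ∀ i < m, f i ≤ f (i + 1))
    (hanti : ∀ i, m ≤ i → f (i + 1) ≤ f i) : UnimodalSeq f := by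
  refine ⟨m, fun i j hij hjm => ?_, fun i j hmi hij => ?_⟩
  · induction j, hij using Nat.le_induction with
    | base => exact le_rfl
    | succ j _ ih => exact (ih (by omega)).trans (hmono j (by omega))
  · induction j, hij using Nat.le_induction with
    | base => exact le_rfl
    | succ j hij ih => exact (hanti j (by omega)).trans ih

theorem parityUnimodal_of_reverse_eq (hrev : C.reverse = C) (hnonneg : ∀ i, 0 ≤ C.coeff i)
    (hle : ∀ i, 2 * i < C.natDegree → C.coeff i ≤ C.coeff (i + 2)) : ParityUnimodal C := by
  have hsymm (i) (hi : i ≤ C.natDegree) : C.coeff (C.natDegree - i) = C.coeff i := by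
    rw [← Polynomial.revAt_le hi, ← Polynomial.coeff_reverse, hrev]
  have hge (i) (hi : C.natDegree ≤ 2 * i) : C.coeff (i + 2) ≤ C.coeff i := by
    rcases le_or_gt (i + 2) C.natDegree with hd | hd
    · rw [← hsymm (i + 2) hd, ← hsymm i (by omega)]
      have hmirror := hle (C.natDegree - (i + 2)) (by omega)
      rwa [show C.natDegree - (i + 2) + 2 = C.natDegree - i by omega] at hmirror
    · rw [Polynomial.coeff_eq_zero_of_natDegree_lt hd]
      exact hnonneg i
  exact ⟨.of_step (m := (C.natDegree + 3) / 4) (fun i hi => hle (2 * i) (by omega))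
      fun i hi => hge (2 * i) (by omega),
    .of_step (m := (C.natDegree + 1) / 4) (fun i hi => hle (2 * i + 1) (by omega))
      fun i hi => hge (2 * i + 1) (by omega)⟩

end PalindromicPolynomials

theorem parity_unimodal_rational_qSchroeder_general
    (a b k : ℕ) (ha : 0 < a) (hb : 0 < b) (hk : k ≤ a) (hkb : k ≤ b)
    (hgcd : Nat.gcd a b = 1) (C : Polynomial ℤ)
    (hC : qInt (a + b - k) * C * (qFactorial k * qFactorial (a - k) * qFactorial (b - k)) =
      qFactorial (a + b - k)) :
    ParityUnimodal C := by
  rw [show a + b - k = b + (a - k) by omega] at hC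
  have hcard : Fintype.card (Fin k ⊕ Fin (a - k)) = a := by simp [hk]
  have : Nonempty (Fin k ⊕ Fin (a - k)) := Fintype.card_pos_iff.1 (by rwa [hcard])
  have hseries := hilbertSeries_isotypic_singularSumIdeal_eq_coe (K := ℂ) (α := Fin k)
    (β := Fin (a - k)) (C := C) hb (by rwa [hcard]) (by simpa) (by simpa)
  rw [Fintype.card_fin] at hseries
  have hcoeff (i) : PowerSeries.coeff (i + k.choose 2) (hilbertSeries
      (isotypic ℂ (Fin k) (Fin (a - k))) (singularSumIdeal ℂ (Fin k ⊕ Fin (a - k)) b)) =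
        C.coeff i := by
    rw [hseries, Polynomial.coeff_coe, Polynomial.coeff_X_pow_mul]
  have hdeg := natDegree_add_two_mul_choose_two hb hkb (by omega) hC
  rw [Nat.add_sub_cancel' hk] at hdeg
  refine parityUnimodal_of_reverse_eq (reverse_eq_of_qInt_mul_eq hb hC)
    (fun i => hcoeff i ▸ coeff_hilbertSeries_nonneg _) fun i hi => ?_
  rw [← hcoeff, ← hcoeff, add_right_comm]
  exact coeff_hilbertSeries_isotypic_singularSumIdeal_le hb (by rw [hcard]; omega)

theorem parity_unimodal_rational_qSchroeder
    (a b k : ℕ) (ha : 0 < a) (hb : 0 < b) (hk : k ≤ a) (hab : a < b)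
    (hgcd : Nat.gcd a b = 1) (C : Polynomial ℤ)
    (hC : qInt (a + b - k) * C * (qFactorial k * qFactorial (a - k) * qFactorial (b - k)) =
      qFactorial (a + b - k)) :
    ParityUnimodal C :=
  parity_unimodal_rational_qSchroeder_general a b k ha hb hk (hk.trans hab.le) hgcd C hC
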